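/- arXiv:2203.16206 — 7 statements merged into one kernel-verified Lean document; each statement's English description precedes it below -/
import Mathlib

section
/- Let b : ℝ → ℝ be differentiable with b(0) = 0 and b'(v) = √(λ₁² − K·(λ₁²·cos²(b v) + λ₂²·sin²(b v))) for all v ∈ ℝ. Then: (1) b is odd, i.e. b(−v) = −b(v) for all v; (2) there exists W > 0 such that b(v + W) = b(v) + π for all v ∈ ℝ; (3) for this W, b(k·W) = k·π for every integer k, and b((2k+1)·W/2) = (2k+1)·π/2 for every integer k. -/
open Real

/-!
Where the speed `F` is positive, the equation `b' = F ∘ b` is solved by separation of variables: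
the travel time `T x = ∫ t in 0..x, (F t)⁻¹` satisfies `T (b v) = v`, so `b` is the inverse of `T`.
If `F` is even then `T` is odd, and if `F` has period `p` then `T (x + p) = T x + T p`; inverting,
`b` is odd and `b (v + W) = b v + p` with `W = T p`. The value of `b` at half a period follows from
`b (W / 2) = b (-(W / 2)) + p = -b (W / 2) + p`.
-/

/-- The time that a point starting at `0` and moving on the line with speed `F y` at position `y`
takes to reach `x`, counted negatively for `x < 0`. It is the inverse of the solution of
`b' = F ∘ b`, `b 0 = 0`. -/
noncomputable def travelTime (F : ℝ → ℝ) (x : ℝ) : ℝ :=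
  ∫ t in (0 : ℝ)..x, (F t)⁻¹

section TravelTime

variable {F : ℝ → ℝ} {p : ℝ}

lemma travelTime_zero (F : ℝ → ℝ) : travelTime F 0 = 0 :=
  intervalIntegral.integral_same

lemma hasDerivAt_travelTime (hF : Continuous F) (hF0 : ∀ x, F x ≠ 0) (x : ℝ) :
    HasDerivAt (travelTime F) (F x)⁻¹ x :=
  ((hF.inv₀ hF0).integral_hasStrictDerivAt 0 x).hasDerivAt

lemma strictMono_travelTime (hF : Continuous F) (hFpos : ∀ x, 0 < F x) :
    StrictMono (travelTime F) :=
  strictMono_of_hasDerivAt_pos (hasDerivAt_travelTime hF fun x => (hFpos x).ne')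
    fun x => inv_pos.2 (hFpos x)

lemma travelTime_pos (hF : Continuous F) (hFpos : ∀ x, 0 < F x) (hp : 0 < p) :
    0 < travelTime F p :=
  travelTime_zero F ▸ strictMono_travelTime hF hFpos hp

lemma travelTime_odd (hFeven : F.Even) : (travelTime F).Odd := fun x => by
  calc travelTime F (-x) = ∫ t in (0 : ℝ)..(-x), (F (-t))⁻¹ := by simp only [travelTime, hFeven _]
    _ = ∫ t in x..0, (F t)⁻¹ := by
      rw [intervalIntegral.integral_comp_neg fun t => (F t)⁻¹, neg_neg, neg_zero]
    _ = -travelTime F x := intervalIntegral.integral_symm 0 x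

lemma travelTime_add_period (hF : Continuous F) (hF0 : ∀ x, F x ≠ 0)
    (hFper : Function.Periodic F p) (x : ℝ) :
    travelTime F (x + p) = travelTime F x + travelTime F p := by
  have hinv : Function.Periodic (fun t => (F t)⁻¹) p := hFper.comp (·⁻¹)
  simpa only [travelTime, zero_add] using
    hinv.intervalIntegral_add_eq_add 0 x (hF.inv₀ hF0).intervalIntegrable

end TravelTime

section Solution

variable {F b : ℝ → ℝ} {p : ℝ}

lemma travelTime_leftInverse_solution (hF : Continuous F) (hF0 : ∀ x, F x ≠ 0)
    (hb : ∀ v, HasDerivAt b (F (b v)) v) (hb0 : b 0 = 0) :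
    Function.LeftInverse (travelTime F) b := fun v => by
  have hderiv (s : ℝ) : HasDerivAt (fun s => travelTime F (b s) - s) 0 s := by
    have hcomp := (hasDerivAt_travelTime hF hF0 (b s)).comp s (hb s)
    exact (hcomp.sub (hasDerivAt_id s)).congr_deriv (by rw [inv_mul_cancel₀ (hF0 _), sub_self])
  have hconst := is_const_of_deriv_eq_zero (fun s => (hderiv s).differentiableAt)
    (fun s => (hderiv s).deriv) v 0
  rw [hb0, travelTime_zero, sub_zero] at hconst
  exact sub_eq_zero.1 hconst

lemma travelTime_rightInverse_solution (hF : Continuous F) (hFpos : ∀ x, 0 < F x)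
    (hb : ∀ v, HasDerivAt b (F (b v)) v) (hb0 : b 0 = 0) :
    Function.RightInverse (travelTime F) b :=
  (travelTime_leftInverse_solution hF (fun x => (hFpos x).ne') hb hb0).rightInverse_of_injective
    (strictMono_travelTime hF hFpos).injective

lemma solution_odd (hF : Continuous F) (hFpos : ∀ x, 0 < F x) (hFeven : F.Even)
    (hb : ∀ v, HasDerivAt b (F (b v)) v) (hb0 : b 0 = 0) : b.Odd := fun v => by
  have hleft := travelTime_leftInverse_solution hF (fun x => (hFpos x).ne') hb hb0
  have hright := travelTime_rightInverse_solution hF hFpos hb hb0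
  calc b (-v) = b (travelTime F (-b v)) := by rw [travelTime_odd hFeven, hleft v]
    _ = -b v := hright _

lemma solution_add_travelTime (hF : Continuous F) (hFpos : ∀ x, 0 < F x)
    (hFper : Function.Periodic F p) (hb : ∀ v, HasDerivAt b (F (b v)) v) (hb0 : b 0 = 0) (v : ℝ) :
    b (v + travelTime F p) = b v + p := by
  have hF0 (x : ℝ) : F x ≠ 0 := (hFpos x).ne'
  have hleft := travelTime_leftInverse_solution hF hF0 hb hb0
  have hright := travelTime_rightInverse_solution hF hFpos hb hb0
  calc b (v + travelTime F p) = b (travelTime F (b v + p)) := by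
        rw [travelTime_add_period hF hF0 hFper, hleft v]
    _ = b v + p := hright _

end Solution

section AddConstMap

open scoped AddConstMap

lemma addConstMap_apply_add_int_mul {R S : Type*} [Ring R] [Ring S] {W : R} {p : S}
    (f : R →+c[W, p] S) (v : R) (k : ℤ) : f (v + k * W) = f v + k * p := by
  simpa only [zsmul_eq_mul] using AddConstMapClass.map_add_zsmul f v k

lemma addConstMap_apply_int_mul {R S : Type*} [Ring R] [Ring S] {W : R} {p : S}
    (f : R →+c[W, p] S) (hf0 : f 0 = 0) (k : ℤ) : f (k * W) = k * p := by
  simpa only [zero_add, hf0] using addConstMap_apply_add_int_mul f 0 k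

lemma addConstMap_apply_odd_mul_half {R S : Type*} [Field R] [NeZero (2 : R)] [Field S]
    [NeZero (2 : S)] {W : R} {p : S} (f : R →+c[W, p] S) (hf : Function.Odd f) (k : ℤ) :
    f ((2 * k + 1) * W / 2) = (2 * k + 1) * p / 2 := by
  have hreflect : f (W / 2) = -f (W / 2) + p := by
    calc f (W / 2) = f (-(W / 2) + W) := by rw [neg_add_eq_sub, sub_half]
      _ = -f (W / 2) + p := by rw [AddConstMapClass.map_add_const, hf]
  have hhalf : f (W / 2) = p / 2 :=
    (eq_div_iff two_ne_zero).2 (by linear_combination hreflect)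
  calc f ((2 * k + 1) * W / 2) = f (W / 2 + k * W) := by
        congr 1
        field_simp
        ring
    _ = f (W / 2) + k * p := addConstMap_apply_add_int_mul f _ k
    _ = (2 * k + 1) * p / 2 := by
        rw [hhalf]
        field_simp
        ring

end AddConstMap

/-- The right-hand side of the equation `b' = F ∘ b` of the helicoid, as a function of the
angle `x = b v`; `l1` and `l2` stand for `λ₁` and `λ₂`. -/
noncomputable def helicoidSpeed (l1 l2 K x : ℝ) : ℝ :=
  √(l1 ^ 2 - K * (l1 ^ 2 * cos x ^ 2 + l2 ^ 2 * sin x ^ 2))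

section HelicoidSpeed

variable {l1 l2 K : ℝ}

lemma continuous_helicoidSpeed (l1 l2 K : ℝ) : Continuous (helicoidSpeed l1 l2 K) := by
  unfold helicoidSpeed
  fun_prop

lemma helicoidSpeed_even (l1 l2 K : ℝ) : (helicoidSpeed l1 l2 K).Even := fun x => by
  simp only [helicoidSpeed, cos_neg, sin_neg, neg_sq]

lemma helicoidSpeed_periodic (l1 l2 K : ℝ) : Function.Periodic (helicoidSpeed l1 l2 K) π :=
  fun x => by simp only [helicoidSpeed, cos_add_pi, sin_add_pi, neg_sq]

lemma helicoidSpeed_pos (hl1 : l1 ≠ 0) (hK : K < 1) (hKl2 : K * l2 ^ 2 < l1 ^ 2) (x : ℝ) :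
    0 < helicoidSpeed l1 l2 K x := by
  have hcos : 0 < l1 ^ 2 - K * l1 ^ 2 :=
    sub_pos.2 (mul_lt_of_lt_one_left (by positivity) hK)
  have hsin : 0 < l1 ^ 2 - K * l2 ^ 2 := sub_pos.2 hKl2
  have hconvex : 0 < cos x ^ 2 * (l1 ^ 2 - K * l1 ^ 2) + sin x ^ 2 * (l1 ^ 2 - K * l2 ^ 2) :=
    convex_Ioi (𝕜 := ℝ) (0 : ℝ) hcos hsin (sq_nonneg _) (sq_nonneg _) (cos_sq_add_sin_sq x)
  refine sqrt_pos.2 (hconvex.trans_eq ?_)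
  linear_combination l1 ^ 2 * cos_sq_add_sin_sq x

end HelicoidSpeed

theorem helicoid_b_odd_quasiperiodic_general {l1 l2 K : ℝ} (hl1 : l1 ≠ 0) (hK : K < 1)
    (hKl2 : K * l2 ^ 2 < l1 ^ 2) {b : ℝ → ℝ}
    (hb : ∀ v, HasDerivAt b (helicoidSpeed l1 l2 K (b v)) v) (hb0 : b 0 = 0) :
    (∀ v, b (-v) = -b v) ∧
    ∃ W > 0, (∀ v, b (v + W) = b v + π) ∧
      (∀ k : ℤ, b (k * W) = k * π) ∧
      (∀ k : ℤ, b ((2 * k + 1) * W / 2) = (2 * k + 1) * π / 2) := by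
  have hcont := continuous_helicoidSpeed l1 l2 K
  have hpos := helicoidSpeed_pos hl1 hK hKl2
  have hodd : b.Odd := solution_odd hcont hpos (helicoidSpeed_even l1 l2 K) hb hb0
  have hadd := solution_add_travelTime hcont hpos (helicoidSpeed_periodic l1 l2 K) hb hb0
  let f : AddConstMap ℝ ℝ (travelTime (helicoidSpeed l1 l2 K) π) π := ⟨b, hadd⟩
  exact ⟨hodd, _, travelTime_pos hcont hpos pi_pos, hadd,
    addConstMap_apply_int_mul f hb0, addConstMap_apply_odd_mul_half f hodd⟩

theorem helicoid_b_odd_quasiperiodic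
    (l1 l2 K : ℝ) (hl : l1 ≥ l2) (hl2 : l2 > 0) (hK : K ∈ Set.Ioo (-1 : ℝ) 1)
    (b : ℝ → ℝ) (hb : Differentiable ℝ b) (hb0 : b 0 = 0)
    (hb' : ∀ v, deriv b v =
      Real.sqrt (l1 ^ 2 - K * (l1 ^ 2 * Real.cos (b v) ^ 2 + l2 ^ 2 * Real.sin (b v) ^ 2))) :
    (∀ v, b (-v) = -b v) ∧
    ∃ W > 0, (∀ v, b (v + W) = b v + π) ∧
      (∀ k : ℤ, b (k * W) = k * π) ∧
      (∀ k : ℤ, b ((2 * k + 1) * W / 2) = (2 * k + 1) * π / 2) :=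
  helicoid_b_odd_quasiperiodic_general (hl2.trans_le hl).ne' hK.2
    ((mul_lt_of_lt_one_left (pow_pos hl2 2) hK.2).trans_le (pow_le_pow_left₀ hl2.le hl 2))
    (fun v => (hb v).hasDerivAt.congr_deriv (hb' v)) hb0
end

section
/- Let b : ℝ → ℝ be differentiable with b(0) = 0 and b'(v) = √(λ₁² − K·(λ₁²·cos²(b v) + λ₂²·sin²(b v))) for all v. Define g : ℝ × ℝ → ℂ by g(u,v) = exp(−λ₁·u)·(cos(b v) + i·sin(b v)), let g_u, g_v denote the partial derivatives of g, set g_z = (g_u − i·g_v)/2 and g_z̄ = (g_u + i·g_v)/2, and set g_{zz̄} = (g_{uu} + g_{vv})/4. Then at every point (u,v): (1) g_{zz̄}·[λ₁²·(g + conj g)² − λ₂²·(g − conj g)²] = 2·[λ₁²·(g + conj g) − λ₂²·(g − conj g)]·g_z·g_z̄; and (2) g_z·conj(g_z̄) = (K/16)·[λ₁²·(g + conj g)² − λ₂²·(g − conj g)²]. -/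
open Real Complex

/-- The Gauss map `g(u+iv) = e^{-λ₁ u} e^{i b(v)}` of the helicoidal surface. -/
noncomputable def helicoidGauss (l1 : ℝ) (b : ℝ → ℝ) (u v : ℝ) : ℂ :=
  (Real.exp (-l1 * u) : ℂ) * ((Real.cos (b v) : ℂ) + Complex.I * (Real.sin (b v) : ℂ))

/-- Partial derivative in `u`. -/
noncomputable def helicoidGauss_u (l1 : ℝ) (b : ℝ → ℝ) (u v : ℝ) : ℂ :=
  deriv (fun t => helicoidGauss l1 b t v) u

/-- Partial derivative in `v`. -/
noncomputable def helicoidGauss_v (l1 : ℝ) (b : ℝ → ℝ) (u v : ℝ) : ℂ :=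
  deriv (fun t => helicoidGauss l1 b u t) v

/-- Second partial derivative in `u`. -/
noncomputable def helicoidGauss_uu (l1 : ℝ) (b : ℝ → ℝ) (u v : ℝ) : ℂ :=
  deriv (fun t => helicoidGauss_u l1 b t v) u

/-- Second partial derivative in `v`. -/
noncomputable def helicoidGauss_vv (l1 : ℝ) (b : ℝ → ℝ) (u v : ℝ) : ℂ :=
  deriv (fun t => helicoidGauss_v l1 b u t) v

/-- Wirtinger derivative `g_z = (g_u - i g_v)/2`. -/
noncomputable def helicoidGauss_z (l1 : ℝ) (b : ℝ → ℝ) (u v : ℝ) : ℂ :=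
  (helicoidGauss_u l1 b u v - Complex.I * helicoidGauss_v l1 b u v) / 2

/-- Wirtinger derivative `g_z̄ = (g_u + i g_v)/2`. -/
noncomputable def helicoidGauss_zbar (l1 : ℝ) (b : ℝ → ℝ) (u v : ℝ) : ℂ :=
  (helicoidGauss_u l1 b u v + Complex.I * helicoidGauss_v l1 b u v) / 2

/-- Mixed Wirtinger derivative `g_{z z̄} = (g_{uu} + g_{vv})/4`. -/
noncomputable def helicoidGauss_zzbar (l1 : ℝ) (b : ℝ → ℝ) (u v : ℝ) : ℂ :=
  (helicoidGauss_uu l1 b u v + helicoidGauss_vv l1 b u v) / 4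

/-!
In polar form `g = exp (-λ₁ u + i b)` every derivative of `g` is a multiple of `g`:
`g_z = (b' - λ₁) g / 2`, `g_z̄ = -(b' + λ₁) g / 2` and `g_{zz̄} = (λ₁² - b'² + i b'') g / 4`.
Put `Q θ = λ₁² cos² θ + λ₂² sin² θ`. The equation for `b` says `λ₁² - b'² = K Q(b)`, and since its
radicand never vanishes it can be differentiated to `b'' = K (λ₁² - λ₂²) sin b cos b`. On the other
side, `λ₁² (g + ḡ)² - λ₂² (g - ḡ)² = 4 |g|² Q(b)` and
`(λ₁² (g + ḡ) - λ₂² (g - ḡ)) g = 2 |g|² (Q(b) + i (λ₁² - λ₂²) sin b cos b)`,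
so both claims reduce to equalities between multiples of `K Q(b)`.
-/

open ComplexConjugate

/-- The quadratic form `λ₁² x² + λ₂² y²` restricted to the unit circle, as a function of the angle.
It is multiplied by `-K` under the square root in the differential equation for `b`. -/
noncomputable def circleQuadForm (l1 l2 θ : ℝ) : ℝ :=
  l1 ^ 2 * Real.cos θ ^ 2 + l2 ^ 2 * Real.sin θ ^ 2

section AngleEquation

theorem hasDerivAt_circleQuadForm (l1 l2 θ : ℝ) :
    HasDerivAt (circleQuadForm l1 l2) (-(2 * ((l1 ^ 2 - l2 ^ 2) * Real.sin θ * Real.cos θ))) θ := by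
  have h := (((Real.hasDerivAt_cos θ).fun_pow 2).const_mul (l1 ^ 2)).fun_add
    (((Real.hasDerivAt_sin θ).fun_pow 2).const_mul (l2 ^ 2))
  refine h.congr_deriv ?_
  ring

theorem sub_mul_circleQuadForm_pos {l1 l2 K : ℝ} (hl1 : l1 ≠ 0) (hK : K < 1)
    (hKl : K * l2 ^ 2 < l1 ^ 2) (θ : ℝ) : 0 < l1 ^ 2 - K * circleQuadForm l1 l2 θ := by
  have hsplit : l1 ^ 2 - K * circleQuadForm l1 l2 θ =
      (1 - K) * l1 ^ 2 * Real.cos θ ^ 2 + (l1 ^ 2 - K * l2 ^ 2) * Real.sin θ ^ 2 := by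
    unfold circleQuadForm
    linear_combination -l1 ^ 2 * Real.sin_sq_add_cos_sq θ
  have hcos : 0 < (1 - K) * l1 ^ 2 := mul_pos (sub_pos.2 hK) (by positivity)
  have hsin : 0 < l1 ^ 2 - K * l2 ^ 2 := sub_pos.2 hKl
  rw [hsplit]
  rcases eq_or_ne (Real.sin θ) 0 with h | h
  · have hcos_sq : Real.cos θ ^ 2 = 1 := by simpa [h] using Real.sin_sq_add_cos_sq θ
    simpa [h, hcos_sq] using hcos
  · exact add_pos_of_nonneg_of_pos (mul_nonneg hcos.le (sq_nonneg _))
      (mul_pos hsin (by positivity))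

theorem hasDerivAt_sqrt_comp_of_hasDerivAt_sqrt {f R : ℝ → ℝ} {R' t : ℝ}
    (hf : HasDerivAt f √(R (f t)) t) (hR : HasDerivAt R R' (f t)) (hpos : 0 < R (f t)) :
    HasDerivAt (fun s => √(R (f s))) (R' / 2) t := by
  refine ((hR.comp t hf).sqrt hpos.ne').congr_deriv ?_
  have hsqrt : √(R (f t)) ≠ 0 := (Real.sqrt_pos.2 hpos).ne'
  simp only [Function.comp_apply]
  field_simp

theorem hasDerivAt_deriv_of_deriv_eq_sqrt_circleQuadForm {l1 l2 K : ℝ} {b : ℝ → ℝ}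
    (hb : Differentiable ℝ b)
    (hb' : ∀ v, deriv b v = √(l1 ^ 2 - K * circleQuadForm l1 l2 (b v))) {v : ℝ}
    (hpos : 0 < l1 ^ 2 - K * circleQuadForm l1 l2 (b v)) :
    HasDerivAt (deriv b) (K * ((l1 ^ 2 - l2 ^ 2) * Real.sin (b v) * Real.cos (b v))) v := by
  have hbv : HasDerivAt b √(l1 ^ 2 - K * circleQuadForm l1 l2 (b v)) v := hb' v ▸ (hb v).hasDerivAt
  have hR := ((hasDerivAt_circleQuadForm l1 l2 (b v)).const_mul K).const_sub (l1 ^ 2)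
  rw [funext hb']
  refine (hasDerivAt_sqrt_comp_of_hasDerivAt_sqrt
    (R := fun θ => l1 ^ 2 - K * circleQuadForm l1 l2 θ) hbv hR hpos).congr_deriv ?_
  ring

end AngleEquation

section Derivatives

variable (l1 : ℝ) {b : ℝ → ℝ} (u : ℝ) {v : ℝ}

theorem helicoidGauss_eq_cexp (b : ℝ → ℝ) (v : ℝ) :
    helicoidGauss l1 b u v = cexp (-l1 * u + I * b v) := by
  rw [helicoidGauss, Complex.exp_add, mul_comm I (b v : ℂ), Complex.exp_mul_I]
  push_cast
  ring

theorem hasDerivAt_helicoidGauss_fst (b : ℝ → ℝ) (v : ℝ) :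
    HasDerivAt (fun t => helicoidGauss l1 b t v) (-l1 * helicoidGauss l1 b u v) u := by
  simp only [helicoidGauss_eq_cexp]
  refine (((hasDerivAt_id u).ofReal_comp.const_mul (-l1 : ℂ)).add_const
    (I * b v)).cexp.congr_deriv ?_
  simp [mul_comm]

theorem hasDerivAt_helicoidGauss_snd {b' : ℝ} (hb : HasDerivAt b b' v) :
    HasDerivAt (fun t => helicoidGauss l1 b u t) (I * b' * helicoidGauss l1 b u v) v := by
  simp only [helicoidGauss_eq_cexp]
  refine ((hb.ofReal_comp.const_mul I).const_add (-l1 * u : ℂ)).cexp.congr_deriv ?_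
  ring

theorem helicoidGauss_u_eq (b : ℝ → ℝ) (v : ℝ) :
    helicoidGauss_u l1 b u v = -l1 * helicoidGauss l1 b u v :=
  (hasDerivAt_helicoidGauss_fst l1 u b v).deriv

theorem helicoidGauss_v_eq (hb : DifferentiableAt ℝ b v) :
    helicoidGauss_v l1 b u v = I * deriv b v * helicoidGauss l1 b u v :=
  (hasDerivAt_helicoidGauss_snd l1 u hb.hasDerivAt).deriv

theorem helicoidGauss_uu_eq (b : ℝ → ℝ) (v : ℝ) :
    helicoidGauss_uu l1 b u v = l1 ^ 2 * helicoidGauss l1 b u v := by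
  simp only [helicoidGauss_uu, helicoidGauss_u_eq]
  rw [((hasDerivAt_helicoidGauss_fst l1 u b v).const_mul (-l1 : ℂ)).deriv]
  ring

theorem helicoidGauss_vv_eq {b'' : ℝ} (hb : Differentiable ℝ b)
    (hb'' : HasDerivAt (deriv b) b'' v) :
    helicoidGauss_vv l1 b u v = (I * b'' - deriv b v ^ 2) * helicoidGauss l1 b u v := by
  have hv : (fun t => helicoidGauss_v l1 b u t) =
      fun t => I * deriv b t * helicoidGauss l1 b u t :=
    funext fun t => helicoidGauss_v_eq l1 u (hb t)
  have hvv := (hb''.ofReal_comp.const_mul I).fun_mul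
    (hasDerivAt_helicoidGauss_snd l1 u (hb v).hasDerivAt)
  rw [helicoidGauss_vv, hv, hvv.deriv]
  linear_combination ((deriv b v : ℝ) : ℂ) ^ 2 * helicoidGauss l1 b u v * I_sq

theorem helicoidGauss_z_eq (hb : DifferentiableAt ℝ b v) :
    helicoidGauss_z l1 b u v = (deriv b v - l1) / 2 * helicoidGauss l1 b u v := by
  rw [helicoidGauss_z, helicoidGauss_u_eq, helicoidGauss_v_eq l1 u hb]
  linear_combination -((deriv b v : ℝ) : ℂ) * helicoidGauss l1 b u v / 2 * I_sq

theorem helicoidGauss_zbar_eq (hb : DifferentiableAt ℝ b v) :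
    helicoidGauss_zbar l1 b u v = -(deriv b v + l1) / 2 * helicoidGauss l1 b u v := by
  rw [helicoidGauss_zbar, helicoidGauss_u_eq, helicoidGauss_v_eq l1 u hb]
  linear_combination ((deriv b v : ℝ) : ℂ) * helicoidGauss l1 b u v / 2 * I_sq

theorem conj_helicoidGauss_zbar_eq (hb : DifferentiableAt ℝ b v) :
    conj (helicoidGauss_zbar l1 b u v) =
      -(deriv b v + l1) / 2 * conj (helicoidGauss l1 b u v) := by
  rw [helicoidGauss_zbar_eq l1 u hb]
  simp only [map_mul, map_div₀, map_neg, map_add, conj_ofReal, map_ofNat]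

theorem helicoidGauss_zzbar_eq {b'' : ℝ} (hb : Differentiable ℝ b)
    (hb'' : HasDerivAt (deriv b) b'' v) :
    helicoidGauss_zzbar l1 b u v =
      (l1 ^ 2 - deriv b v ^ 2 + I * b'') / 4 * helicoidGauss l1 b u v := by
  rw [helicoidGauss_zzbar, helicoidGauss_uu_eq, helicoidGauss_vv_eq l1 u hb hb'']
  ring

end Derivatives

section QuadraticForm

variable (l1 l2 : ℝ) (b : ℝ → ℝ) (u v : ℝ)

theorem helicoidGauss_add_conj :
    helicoidGauss l1 b u v + conj (helicoidGauss l1 b u v) =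
      2 * Real.exp (-l1 * u) * Real.cos (b v) := by
  simp only [helicoidGauss, map_mul, map_add, conj_ofReal, conj_I]
  ring

theorem helicoidGauss_sub_conj :
    helicoidGauss l1 b u v - conj (helicoidGauss l1 b u v) =
      2 * I * Real.exp (-l1 * u) * Real.sin (b v) := by
  simp only [helicoidGauss, map_mul, map_add, conj_ofReal, conj_I]
  ring

theorem helicoidGauss_mul_conj :
    helicoidGauss l1 b u v * conj (helicoidGauss l1 b u v) = (Real.exp (-l1 * u) : ℂ) ^ 2 := by
  have hcircle : (Real.sin (b v) : ℂ) ^ 2 + (Real.cos (b v) : ℂ) ^ 2 = 1 :=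
    mod_cast Real.sin_sq_add_cos_sq (b v)
  simp only [helicoidGauss, map_mul, map_add, conj_ofReal, conj_I]
  linear_combination (Real.exp (-l1 * u) : ℂ) ^ 2 * (hcircle - (Real.sin (b v) : ℂ) ^ 2 * I_sq)

theorem sq_add_conj_sub_sq_sub_conj_helicoidGauss :
    (l1 : ℂ) ^ 2 * (helicoidGauss l1 b u v + conj (helicoidGauss l1 b u v)) ^ 2 -
        (l2 : ℂ) ^ 2 * (helicoidGauss l1 b u v - conj (helicoidGauss l1 b u v)) ^ 2 =
      4 * (Real.exp (-l1 * u) : ℂ) ^ 2 * circleQuadForm l1 l2 (b v) := by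
  rw [helicoidGauss_add_conj, helicoidGauss_sub_conj, circleQuadForm]
  simp only [ofReal_add, ofReal_mul, ofReal_pow]
  linear_combination
    -4 * (l2 : ℂ) ^ 2 * (Real.exp (-l1 * u) : ℂ) ^ 2 * (Real.sin (b v) : ℂ) ^ 2 * I_sq

theorem add_conj_sub_sub_conj_mul_helicoidGauss :
    ((l1 : ℂ) ^ 2 * (helicoidGauss l1 b u v + conj (helicoidGauss l1 b u v)) -
        (l2 : ℂ) ^ 2 * (helicoidGauss l1 b u v - conj (helicoidGauss l1 b u v))) *
        helicoidGauss l1 b u v =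
      2 * (Real.exp (-l1 * u) : ℂ) ^ 2 * (circleQuadForm l1 l2 (b v) +
        I * ((l1 ^ 2 - l2 ^ 2) * Real.sin (b v) * Real.cos (b v))) := by
  rw [helicoidGauss_add_conj, helicoidGauss_sub_conj, circleQuadForm, helicoidGauss]
  simp only [ofReal_add, ofReal_mul, ofReal_pow]
  linear_combination
    -2 * (l2 : ℂ) ^ 2 * (Real.exp (-l1 * u) : ℂ) ^ 2 * (Real.sin (b v) : ℂ) ^ 2 * I_sq

end QuadraticForm

section Identities

variable {l1 l2 K : ℝ} {b : ℝ → ℝ} {v : ℝ} (u : ℝ)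

theorem helicoidGauss_harmonic (hb : Differentiable ℝ b)
    (hsq : deriv b v ^ 2 = l1 ^ 2 - K * circleQuadForm l1 l2 (b v))
    (hb'' : HasDerivAt (deriv b) (K * ((l1 ^ 2 - l2 ^ 2) * Real.sin (b v) * Real.cos (b v))) v) :
    helicoidGauss_zzbar l1 b u v *
        ((l1 : ℂ) ^ 2 * (helicoidGauss l1 b u v + conj (helicoidGauss l1 b u v)) ^ 2 -
          (l2 : ℂ) ^ 2 * (helicoidGauss l1 b u v - conj (helicoidGauss l1 b u v)) ^ 2) =
      2 * ((l1 : ℂ) ^ 2 * (helicoidGauss l1 b u v + conj (helicoidGauss l1 b u v)) -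
          (l2 : ℂ) ^ 2 * (helicoidGauss l1 b u v - conj (helicoidGauss l1 b u v))) *
        helicoidGauss_z l1 b u v * helicoidGauss_zbar l1 b u v := by
  have hsqC : ((deriv b v : ℝ) : ℂ) ^ 2 = l1 ^ 2 - K * circleQuadForm l1 l2 (b v) :=
    mod_cast hsq
  set g := helicoidGauss l1 b u v
  set Q : ℂ := ↑(circleQuadForm l1 l2 (b v))
  set S : ℂ := (l1 ^ 2 - l2 ^ 2) * Real.sin (b v) * Real.cos (b v) with hS
  have hzzbar : helicoidGauss_zzbar l1 b u v = K * (Q + I * S) / 4 * g := by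
    rw [helicoidGauss_zzbar_eq l1 u hb hb'', hsqC, hS]
    simp only [ofReal_mul, ofReal_sub, ofReal_pow]
    ring
  have hz_mul_zbar : helicoidGauss_z l1 b u v * helicoidGauss_zbar l1 b u v =
      K * Q / 4 * g ^ 2 := by
    rw [helicoidGauss_z_eq l1 u (hb v), helicoidGauss_zbar_eq l1 u (hb v)]
    linear_combination -(g ^ 2 / 4) * hsqC
  rw [hzzbar, mul_assoc _ (helicoidGauss_z l1 b u v), hz_mul_zbar,
    sq_add_conj_sub_sq_sub_conj_helicoidGauss]
  linear_combination
    -(K * Q * g / 2) * add_conj_sub_sub_conj_mul_helicoidGauss l1 l2 b u v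

theorem helicoidGauss_Hopf (hb : DifferentiableAt ℝ b v)
    (hsq : deriv b v ^ 2 = l1 ^ 2 - K * circleQuadForm l1 l2 (b v)) :
    helicoidGauss_z l1 b u v * conj (helicoidGauss_zbar l1 b u v) =
      ((K : ℂ) / 16) *
        ((l1 : ℂ) ^ 2 * (helicoidGauss l1 b u v + conj (helicoidGauss l1 b u v)) ^ 2 -
          (l2 : ℂ) ^ 2 * (helicoidGauss l1 b u v - conj (helicoidGauss l1 b u v)) ^ 2) := by
  have hsqC : ((deriv b v : ℝ) : ℂ) ^ 2 = l1 ^ 2 - K * circleQuadForm l1 l2 (b v) :=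
    mod_cast hsq
  rw [sq_add_conj_sub_sq_sub_conj_helicoidGauss, helicoidGauss_z_eq l1 u hb,
    conj_helicoidGauss_zbar_eq l1 u hb]
  linear_combination
    ((l1 : ℂ) ^ 2 - deriv b v ^ 2) / 4 * helicoidGauss_mul_conj l1 b u v -
      (Real.exp (-l1 * u) : ℂ) ^ 2 / 4 * hsqC

end Identities

theorem helicoidGauss_harmonic_and_Hopf_general
    (l1 l2 K : ℝ) (hl1 : l1 ≠ 0) (hK : K < 1) (hKl : K * l2 ^ 2 < l1 ^ 2)
    (b : ℝ → ℝ) (hb : Differentiable ℝ b)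
    (hb' : ∀ v, deriv b v =
      Real.sqrt (l1 ^ 2 - K * (l1 ^ 2 * Real.cos (b v) ^ 2 + l2 ^ 2 * Real.sin (b v) ^ 2))) :
    ∀ u v : ℝ,
      (helicoidGauss_zzbar l1 b u v *
          ((l1 : ℂ) ^ 2 * (helicoidGauss l1 b u v + conj (helicoidGauss l1 b u v)) ^ 2 -
            (l2 : ℂ) ^ 2 * (helicoidGauss l1 b u v - conj (helicoidGauss l1 b u v)) ^ 2) =
        2 * ((l1 : ℂ) ^ 2 * (helicoidGauss l1 b u v + conj (helicoidGauss l1 b u v)) -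
            (l2 : ℂ) ^ 2 * (helicoidGauss l1 b u v - conj (helicoidGauss l1 b u v))) *
          helicoidGauss_z l1 b u v * helicoidGauss_zbar l1 b u v) ∧
      helicoidGauss_z l1 b u v * conj (helicoidGauss_zbar l1 b u v) =
        ((K : ℂ) / 16) *
          ((l1 : ℂ) ^ 2 * (helicoidGauss l1 b u v + conj (helicoidGauss l1 b u v)) ^ 2 -
            (l2 : ℂ) ^ 2 * (helicoidGauss l1 b u v - conj (helicoidGauss l1 b u v)) ^ 2) := by
  intro u v
  have hpos := sub_mul_circleQuadForm_pos hl1 hK hKl (b v)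
  have hsq : deriv b v ^ 2 = l1 ^ 2 - K * circleQuadForm l1 l2 (b v) := by
    rw [hb' v]
    exact Real.sq_sqrt hpos.le
  have hb'' := hasDerivAt_deriv_of_deriv_eq_sqrt_circleQuadForm hb hb' hpos
  exact ⟨helicoidGauss_harmonic u hb hsq hb'', helicoidGauss_Hopf u (hb v) hsq⟩

theorem helicoidGauss_harmonic_and_Hopf
    (l1 l2 K : ℝ) (hl : l1 ≥ l2) (hl2 : l2 > 0) (hK : K ∈ Set.Ioo (-1 : ℝ) 1)
    (b : ℝ → ℝ) (hb : Differentiable ℝ b) (hb0 : b 0 = 0)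
    (hb' : ∀ v, deriv b v =
      Real.sqrt (l1 ^ 2 - K * (l1 ^ 2 * Real.cos (b v) ^ 2 + l2 ^ 2 * Real.sin (b v) ^ 2))) :
    ∀ u v : ℝ,
      (helicoidGauss_zzbar l1 b u v *
          ((l1 : ℂ) ^ 2 * (helicoidGauss l1 b u v + (starRingEnd ℂ) (helicoidGauss l1 b u v)) ^ 2 -
            (l2 : ℂ) ^ 2 * (helicoidGauss l1 b u v - (starRingEnd ℂ) (helicoidGauss l1 b u v)) ^ 2) =
        2 * ((l1 : ℂ) ^ 2 * (helicoidGauss l1 b u v + (starRingEnd ℂ) (helicoidGauss l1 b u v)) -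
            (l2 : ℂ) ^ 2 * (helicoidGauss l1 b u v - (starRingEnd ℂ) (helicoidGauss l1 b u v))) *
          helicoidGauss_z l1 b u v * helicoidGauss_zbar l1 b u v) ∧
      helicoidGauss_z l1 b u v * (starRingEnd ℂ) (helicoidGauss_zbar l1 b u v) =
        ((K : ℂ) / 16) *
          ((l1 : ℂ) ^ 2 * (helicoidGauss l1 b u v + (starRingEnd ℂ) (helicoidGauss l1 b u v)) ^ 2 -
            (l2 : ℂ) ^ 2 * (helicoidGauss l1 b u v - (starRingEnd ℂ) (helicoidGauss l1 b u v)) ^ 2) := by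
  have hKl : K * l2 ^ 2 < l1 ^ 2 :=
    (mul_lt_of_lt_one_left (pow_pos hl2 2) hK.2).trans_le (pow_le_pow_left₀ hl2.le hl 2)
  exact helicoidGauss_harmonic_and_Hopf_general l1 l2 K (hl2.trans_le hl).ne' hK.2 hKl b hb hb'
end

section
/- Let b : ℝ → ℝ be differentiable with b(0) = 0 and b'(v) = √(λ₁² − K·(λ₁²·cos²(b v) + λ₂²·sin²(b v))) for all v, let W > 0 satisfy b(v + W) = b(v) + π for all v, and let x₃ : ℝ → ℝ be differentiable with x₃(0) = 0 and x₃'(v) = λ₁·λ₂·K/(λ₁ + b'(v)). Define X : ℝ × ℝ → ℝ³ by X(u,v) = (x₁(u,v), x₂(u,v), x₃(v)) with x₁(u,v) = (1/(λ₁²·λ₂))·((1/λ₁)·cos(x₃ v)·sin(b v) + (1/λ₂)·sin(x₃ v)·cos(b v))·x₃'(v)·sinh(−λ₁·u) and x₂(u,v) = (1/(λ₁²·λ₂))·((1/λ₁)·sin(x₃ v)·sin(b v) − (1/λ₂)·cos(x₃ v)·cos(b v))·x₃'(v)·sinh(−λ₁·u). Then for all u, v ∈ ℝ one has (0, 0,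 2·x₃(W)) * X(u,v) = X(u, v + 2W), where * is the group operation of the universal cover of E(2). -/
open Real

/-- The group operation of the universal cover of `E(2)` on `ℝ³`. -/
noncomputable def e2Mul (a b : ℝ × ℝ × ℝ) : ℝ × ℝ × ℝ :=
  (a.1 + b.1 * Real.cos a.2.2 - b.2.1 * Real.sin a.2.2,
   a.2.1 + b.1 * Real.sin a.2.2 + b.2.1 * Real.cos a.2.2,
   a.2.2 + b.2.2)

/-- First coordinate of the helicoidal immersion. -/
noncomputable def helicoidX1 (l1 l2 : ℝ) (b x3 : ℝ → ℝ) (u v : ℝ) : ℝ :=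
  (1 / (l1 ^ 2 * l2)) *
    ((1 / l1) * Real.cos (x3 v) * Real.sin (b v) + (1 / l2) * Real.sin (x3 v) * Real.cos (b v)) *
    deriv x3 v * Real.sinh (-l1 * u)

/-- Second coordinate of the helicoidal immersion. -/
noncomputable def helicoidX2 (l1 l2 : ℝ) (b x3 : ℝ → ℝ) (u v : ℝ) : ℝ :=
  (1 / (l1 ^ 2 * l2)) *
    ((1 / l1) * Real.sin (x3 v) * Real.sin (b v) - (1 / l2) * Real.cos (x3 v) * Real.cos (b v)) *
    deriv x3 v * Real.sinh (-l1 * u)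

/-- The helicoidal immersion `X(u,v)`. -/
noncomputable def helicoidX (l1 l2 : ℝ) (b x3 : ℝ → ℝ) (u v : ℝ) : ℝ × ℝ × ℝ :=
  (helicoidX1 l1 l2 b x3 u v, helicoidX2 l1 l2 b x3 u v, x3 v)

/-!
Advancing `v` by `W` adds `π` to `b`, which changes the sign of both `sin b` and `cos b`, and adds
the constant `x₃(W)` to `x₃`, because `x₃'` is `W`-periodic. Hence the left translation by
`(0, 0, x₃(W))`, which rotates the horizontal plane by the angle `x₃(W)`, carries `X(u, v)` to
`X(-u, v + W)`: the sign is absorbed by the odd factor `sinh`. Applying this twice restores `u`.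
-/

theorem periodic_deriv_of_map_add_eq_add {𝕜 E : Type*} [NontriviallyNormedField 𝕜]
    [NormedAddCommGroup E] [NormedSpace 𝕜 E] {f : 𝕜 → E} {w : 𝕜} {c : E}
    (hf : ∀ x, f (x + w) = f x + c) :
    Function.Periodic (deriv f) w := fun x => by
  rw [← deriv_comp_add_const, funext hf, deriv_add_const]

theorem map_add_eq_add_sub_of_periodic_deriv {𝕜 E : Type*} [RCLike 𝕜]
    [NormedAddCommGroup E] [NormedSpace 𝕜 E] {f : 𝕜 → E} {w : 𝕜} (hf : Differentiable 𝕜 f)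
    (hf' : Function.Periodic (deriv f) w) (x : 𝕜) : f (x + w) = f x + (f w - f 0) := by
  have hshift : Differentiable 𝕜 fun y => f (y + w) := hf.comp (differentiable_id.add_const w)
  have hderiv (y : 𝕜) : deriv (fun y => f (y + w) - f y) y = 0 := by
    rw [deriv_fun_sub (hshift y) (hf y), deriv_comp_add_const, hf' y, sub_self]
  have hconst : f (x + w) - f x = f (0 + w) - f 0 :=
    is_const_of_deriv_eq_zero (hshift.sub hf) hderiv x 0
  rw [zero_add] at hconst
  rw [← hconst, add_sub_cancel]

theorem e2Mul_assoc (p q r : ℝ × ℝ × ℝ) : e2Mul (e2Mul p q) r = e2Mul p (e2Mul q r) := by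
  simp only [e2Mul, cos_add, sin_add, Prod.mk.injEq]
  refine ⟨?_, ?_, ?_⟩ <;> ring

theorem e2Mul_vertical_vertical (s t : ℝ) : e2Mul (0, 0, s) (0, 0, t) = (0, 0, s + t) := by
  simp [e2Mul]

theorem e2Mul_vertical_helicoidX {l1 l2 W c : ℝ} {b x3 : ℝ → ℝ}
    (hb : ∀ v, b (v + W) = b v + π) (hx3 : ∀ v, x3 (v + W) = x3 v + c) (u v : ℝ) :
    e2Mul (0, 0, c) (helicoidX l1 l2 b x3 u v) = helicoidX l1 l2 b x3 (-u) (v + W) := by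
  have hderiv : deriv x3 (v + W) = deriv x3 v := periodic_deriv_of_map_add_eq_add hx3 v
  simp only [e2Mul, helicoidX, helicoidX1, helicoidX2, hb, hx3, hderiv, sin_add_pi, cos_add_pi,
    sin_add (x3 v), cos_add (x3 v), mul_neg, sinh_neg, Prod.mk.injEq]
  refine ⟨?_, ?_, ?_⟩ <;> ring

theorem helicoid_invariant_under_vertical_translation_general {l1 l2 W : ℝ}
    (_hl1 : l1 ≠ 0) (_hl2 : l2 ≠ 0) {b x3 : ℝ → ℝ} (hb : ∀ v, b (v + W) = b v + π)
    (hx3 : Differentiable ℝ x3) (hx30 : x3 0 = 0) (hx3' : Function.Periodic (deriv x3) W)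
    (u v : ℝ) :
    e2Mul (0, 0, 2 * x3 W) (helicoidX l1 l2 b x3 u v) = helicoidX l1 l2 b x3 u (v + 2 * W) := by
  have hx3_add (v : ℝ) : x3 (v + W) = x3 v + x3 W := by
    simpa only [hx30, sub_zero] using map_add_eq_add_sub_of_periodic_deriv hx3 hx3' v
  rw [two_mul, ← e2Mul_vertical_vertical, e2Mul_assoc, e2Mul_vertical_helicoidX hb hx3_add,
    e2Mul_vertical_helicoidX hb hx3_add, neg_neg, add_assoc, ← two_mul]

theorem helicoid_invariant_under_vertical_translation
    (l1 l2 K : ℝ) (hl : l1 ≥ l2) (hl2 : l2 > 0) (hK : K ∈ Set.Ioo (-1 : ℝ) 1) (hK0 : K ≠ 0)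
    (b : ℝ → ℝ) (hb : Differentiable ℝ b) (hb0 : b 0 = 0)
    (hb' : ∀ v, deriv b v =
      Real.sqrt (l1 ^ 2 - K * (l1 ^ 2 * Real.cos (b v) ^ 2 + l2 ^ 2 * Real.sin (b v) ^ 2)))
    (W : ℝ) (hW : W > 0) (hbW : ∀ v, b (v + W) = b v + π)
    (x3 : ℝ → ℝ) (hx3 : Differentiable ℝ x3) (hx30 : x3 0 = 0)
    (hx3' : ∀ v, deriv x3 v = l1 * l2 * K / (l1 + deriv b v)) :
    ∀ u v : ℝ,
      e2Mul (0, 0, 2 * x3 W) (helicoidX l1 l2 b x3 u v) = helicoidX l1 l2 b x3 u (v + 2 * W) := by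
  have hderiv : Function.Periodic (deriv x3) W := fun v => by
    rw [hx3', hx3', periodic_deriv_of_map_add_eq_add hbW v]
  exact helicoid_invariant_under_vertical_translation_general (hl2.trans_le hl).ne' hl2.ne'
    hbW hx3 hx30 hderiv
end

section
/- For K ∈ (0,1) define P(K) = ∫₀^π 2·λ₁·λ₂·K / (√(λ₁² − K·(λ₁²·cos² w + λ₂²·sin² w)) · (λ₁ + √(λ₁² − K·(λ₁²·cos² w + λ₂²·sin² w)))) dw. Then P is strictly increasing on (0,1), and for every T > 0 there exists a unique K ∈ (0,1) with P(K) = T. -/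
open Real

/-- The vertical period `2 x₃(W)` of the helicoid of parameter `K`. -/
noncomputable def helicoidPeriod (l1 l2 K : ℝ) : ℝ :=
  ∫ w in (0 : ℝ)..π,
    2 * l1 * l2 * K /
      (Real.sqrt (l1 ^ 2 - K * (l1 ^ 2 * Real.cos w ^ 2 + l2 ^ 2 * Real.sin w ^ 2)) *
        (l1 + Real.sqrt (l1 ^ 2 - K * (l1 ^ 2 * Real.cos w ^ 2 + l2 ^ 2 * Real.sin w ^ 2))))

/-!
Rationalising the denominator, with `g = l1² cos² w + l2² sin² w` and `R = √(l1² - K g)`, the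
integrand becomes `(2 l1 l2 / g) (l1 / R - 1)`, which is visibly strictly increasing in `K < 1`.
Since `R ≤ l1 (√(1 - K) + w)`, comparison with `∫ dw / (√(1 - K) + w)` shows that the period grows
at least logarithmically in `1 / (1 - K)` as `K → 1`. It is continuous in `K` and vanishes at
`K = 0`, so by the intermediate value theorem it takes each positive value.
-/

open Set Filter Topology MeasureTheory

section General

theorem bijOn_Ioo_Ioi_of_strictMonoOn_of_tendsto_atTop {α β : Type*}
    [ConditionallyCompleteLinearOrder α] [TopologicalSpace α] [OrderTopology α] [DenselyOrdered α]
    [LinearOrder β] [TopologicalSpace β] [OrderClosedTopology β] {f : α → β} {a b : α}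
    (hab : a < b) (hmono : StrictMonoOn f (Ico a b)) (hcont : ContinuousOn f (Ico a b))
    (htop : Tendsto f (𝓝[<] b) atTop) : BijOn f (Ioo a b) (Ioi (f a)) := by
  have ha : a ∈ Ico a b := left_mem_Ico.2 hab
  refine ⟨fun x hx ↦ hmono ha (Ioo_subset_Ico_self hx) hx.1,
    hmono.injOn.mono Ioo_subset_Ico_self, fun y hy ↦ ?_⟩
  have : (𝓝[<] b).NeBot := nhdsLT_neBot_of_exists_lt ⟨a, hab⟩
  have hle : 𝓝[<] b ≤ 𝓟 (Ico a b) := le_principal_iff.2 (Ico_mem_nhdsLT hab)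
  obtain ⟨x, hx, rfl⟩ :=
    isPreconnected_Ico.intermediate_value_Ici ha hle hcont htop (mem_Ici_of_Ioi hy)
  exact ⟨x, ⟨(hmono.lt_iff_lt ha hx).1 hy, hx.2⟩, rfl⟩

theorem continuousOn_intervalIntegral_of_continuousOn_prod {X E : Type*} [TopologicalSpace X]
    [NormedAddCommGroup E] [NormedSpace ℝ E] {μ : Measure ℝ} [IsLocallyFiniteMeasure μ]
    [NullSingletonClass μ] {f : X → ℝ → E} {s : Set X}
    (hf : ContinuousOn f.uncurry (s ×ˢ univ)) (a b : ℝ) :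
    ContinuousOn (fun x ↦ ∫ t in a..b, f x t ∂μ) s := by
  rw [continuousOn_iff_continuous_domRestrict]
  exact intervalIntegral.continuous_parametric_intervalIntegral_of_continuous'
    (f := fun (x : s) t ↦ f x t)
    (hf.comp_continuous (f := fun p : s × ℝ ↦ ((p.1 : X), p.2)) (by fun_prop)
      fun p ↦ ⟨p.1.2, mem_univ _⟩) a b

theorem strictMonoOn_intervalIntegral {α : Type*} [Preorder α] {f : α → ℝ → ℝ} {s : Set α}
    {a b : ℝ} (hab : a < b) (hcont : ∀ x ∈ s, ContinuousOn (f x) (Icc a b))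
    (hmono : ∀ t ∈ Icc a b, StrictMonoOn (fun x ↦ f x t) s) :
    StrictMonoOn (fun x ↦ ∫ t in a..b, f x t) s := fun x hx y hy hxy ↦
  intervalIntegral.integral_lt_integral_of_continuousOn_of_le_of_exists_lt hab (hcont x hx)
    (hcont y hy) (fun t ht ↦ (hmono t (Ioc_subset_Icc_self ht) hx hy hxy).le)
    ⟨a, left_mem_Icc.2 hab.le, hmono a (left_mem_Icc.2 hab.le) hx hy hxy⟩

theorem integral_inv_const_add {ε b : ℝ} (hε : 0 < ε) (hb : 0 ≤ b) :
    ∫ x in (0 : ℝ)..b, (ε + x)⁻¹ = log (1 + b / ε) := by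
  rw [intervalIntegral.integral_comp_add_left (fun x ↦ x⁻¹), add_zero,
    integral_inv_of_pos hε (by positivity), add_div, div_self hε.ne']

theorem tendsto_log_one_add_div_sqrt_one_sub {c : ℝ} (hc : 0 < c) :
    Tendsto (fun x : ℝ ↦ log (1 + c / √(1 - x))) (𝓝[<] 1) atTop := by
  have hsqrt : Tendsto (fun x : ℝ ↦ √(1 - x)) (𝓝[<] 1) (𝓝[>] 0) := by
    refine tendsto_nhdsWithin_iff.2 ⟨?_, ?_⟩
    · have hcont : Continuous fun x : ℝ ↦ √(1 - x) := by fun_prop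
      simpa using (hcont.tendsto 1).mono_left nhdsWithin_le_nhds
    · filter_upwards [self_mem_nhdsWithin] with x hx using sqrt_pos.2 (sub_pos.2 hx)
  exact tendsto_log_atTop.comp <| tendsto_atTop_add_const_left _ _ <|
    (tendsto_inv_nhdsGT_zero.comp hsqrt).const_mul_atTop hc

end General

/-- The quadratic form `a² x² + b² y²` evaluated at the unit vector `(cos w, sin w)`. -/
noncomputable def ellipseForm (a b w : ℝ) : ℝ :=
  a ^ 2 * cos w ^ 2 + b ^ 2 * sin w ^ 2

section EllipseForm

variable {a b K : ℝ}

theorem ellipseForm_nonneg (a b w : ℝ) : 0 ≤ ellipseForm a b w := by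
  unfold ellipseForm
  positivity

theorem ellipseForm_pos (ha : a ≠ 0) (hb : b ≠ 0) (w : ℝ) : 0 < ellipseForm a b w :=
  calc 0 < min (a ^ 2) (b ^ 2) := by positivity
    _ = min (a ^ 2) (b ^ 2) * cos w ^ 2 + min (a ^ 2) (b ^ 2) * sin w ^ 2 := by
        rw [← mul_add, cos_sq_add_sin_sq, mul_one]
    _ ≤ ellipseForm a b w := by
        unfold ellipseForm
        gcongr
        · exact min_le_left _ _
        · exact min_le_right _ _

theorem ellipseForm_le_sq (hab : |b| ≤ |a|) (w : ℝ) : ellipseForm a b w ≤ a ^ 2 :=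
  calc ellipseForm a b w ≤ a ^ 2 * cos w ^ 2 + a ^ 2 * sin w ^ 2 := by
        unfold ellipseForm
        gcongr _ + ?_ * _
        exact sq_le_sq.2 hab
    _ = a ^ 2 := by rw [← mul_add, cos_sq_add_sin_sq, mul_one]

theorem sq_mul_one_sub_sq_le_ellipseForm (a b w : ℝ) :
    a ^ 2 * (1 - w ^ 2) ≤ ellipseForm a b w := by
  have hsin : sin w ^ 2 ≤ w ^ 2 := sq_le_sq.2 abs_sin_le_abs
  calc a ^ 2 * (1 - w ^ 2) ≤ a ^ 2 * (1 - sin w ^ 2) := by gcongr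
    _ = a ^ 2 * cos w ^ 2 := by rw [cos_sq']
    _ ≤ ellipseForm a b w := le_add_of_nonneg_right (by positivity)

theorem mul_ellipseForm_le_sq (hab : |b| ≤ |a|) (hK : K ≤ 1) (w : ℝ) :
    K * ellipseForm a b w ≤ a ^ 2 :=
  (mul_le_of_le_one_left (ellipseForm_nonneg a b w) hK).trans (ellipseForm_le_sq hab w)

theorem sq_sub_mul_ellipseForm_pos (ha : a ≠ 0) (hab : |b| ≤ |a|) (hK : K < 1) (w : ℝ) :
    0 < a ^ 2 - K * ellipseForm a b w := by
  rcases (ellipseForm_nonneg a b w).eq_or_lt with hzero | hpos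
  · rw [← hzero, mul_zero, sub_zero]
    positivity
  · exact sub_pos.2 ((mul_lt_of_lt_one_left hpos hK).trans_le (ellipseForm_le_sq hab w))

end EllipseForm

/-- The square root in the integrand of `helicoidPeriod`; by the convention for `√`, it is `0` where
the radicand is negative, which does not happen for `|l2| ≤ |l1|` and `K < 1`. -/
noncomputable def helicoidRoot (l1 l2 K w : ℝ) : ℝ :=
  √(l1 ^ 2 - K * ellipseForm l1 l2 w)

/-- The integrand of `helicoidPeriod`. -/
noncomputable def helicoidIntegrand (l1 l2 K w : ℝ) : ℝ :=
  2 * l1 * l2 * K / (helicoidRoot l1 l2 K w * (l1 + helicoidRoot l1 l2 K w))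

theorem helicoidPeriod_eq_integral_helicoidIntegrand (l1 l2 K : ℝ) :
    helicoidPeriod l1 l2 K = ∫ w in (0 : ℝ)..π, helicoidIntegrand l1 l2 K w :=
  rfl

theorem helicoidPeriod_zero (l1 l2 : ℝ) : helicoidPeriod l1 l2 0 = 0 := by
  simp [helicoidPeriod]

section HelicoidRoot

variable {l1 l2 K : ℝ}

theorem helicoidRoot_pos (h1 : l1 ≠ 0) (h21 : |l2| ≤ |l1|) (hK : K < 1) (w : ℝ) :
    0 < helicoidRoot l1 l2 K w :=
  sqrt_pos.2 (sq_sub_mul_ellipseForm_pos h1 h21 hK w)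

theorem helicoidRoot_sq (h21 : |l2| ≤ |l1|) (hK : K ≤ 1) (w : ℝ) :
    helicoidRoot l1 l2 K w ^ 2 = l1 ^ 2 - K * ellipseForm l1 l2 w :=
  sq_sqrt (sub_nonneg.2 (mul_ellipseForm_le_sq h21 hK w))

theorem helicoidRoot_le (h1 : 0 ≤ l1) (hK : 0 ≤ K) (w : ℝ) : helicoidRoot l1 l2 K w ≤ l1 :=
  sqrt_le_iff.2 ⟨h1, sub_le_self _ (mul_nonneg hK (ellipseForm_nonneg l1 l2 w))⟩

theorem helicoidRoot_le_mul_sqrt_add_abs (h1 : 0 ≤ l1) (hK0 : 0 ≤ K) (hK1 : K ≤ 1) (w : ℝ) :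
    helicoidRoot l1 l2 K w ≤ l1 * (√(1 - K) + |w|) := by
  refine sqrt_le_iff.2 ⟨by positivity, ?_⟩
  calc l1 ^ 2 - K * ellipseForm l1 l2 w
      ≤ l1 ^ 2 - K * (l1 ^ 2 * (1 - w ^ 2)) := by
        gcongr
        exact sq_mul_one_sub_sq_le_ellipseForm l1 l2 w
    _ = l1 ^ 2 * (1 - K + K * w ^ 2) := by ring
    _ ≤ l1 ^ 2 * (1 - K + w ^ 2) := by
        gcongr
        exact mul_le_of_le_one_left (sq_nonneg w) hK1
    _ = l1 ^ 2 * (√(1 - K) ^ 2 + |w| ^ 2) := by rw [sq_sqrt (sub_nonneg.2 hK1), sq_abs]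
    _ ≤ l1 ^ 2 * (√(1 - K) + |w|) ^ 2 := by
        gcongr
        exact pow_add_pow_le (sqrt_nonneg _) (abs_nonneg w) two_ne_zero
    _ = (l1 * (√(1 - K) + |w|)) ^ 2 := (mul_pow _ _ _).symm

theorem strictAntiOn_helicoidRoot (h2 : l2 ≠ 0) (h21 : |l2| ≤ |l1|) (w : ℝ) :
    StrictAntiOn (fun K ↦ helicoidRoot l1 l2 K w) (Iic 1) := by
  intro K _ L hL hKL
  have h1 : l1 ≠ 0 := abs_pos.1 ((abs_pos.2 h2).trans_le h21)
  have hpos : 0 < ellipseForm l1 l2 w := ellipseForm_pos h1 h2 w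
  exact sqrt_lt_sqrt (sub_nonneg.2 (mul_ellipseForm_le_sq h21 hL w)) (by gcongr)

theorem continuous_helicoidRoot (l1 l2 : ℝ) :
    Continuous fun p : ℝ × ℝ ↦ helicoidRoot l1 l2 p.1 p.2 := by
  unfold helicoidRoot ellipseForm
  fun_prop

end HelicoidRoot

section HelicoidIntegrand

variable {l1 l2 K : ℝ}

theorem continuousOn_helicoidIntegrand (h1 : 0 < l1) (h21 : |l2| ≤ |l1|) :
    ContinuousOn (fun p : ℝ × ℝ ↦ helicoidIntegrand l1 l2 p.1 p.2) (Iio 1 ×ˢ univ) := by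
  have hroot := continuous_helicoidRoot l1 l2
  refine ContinuousOn.div (by fun_prop) (by fun_prop) fun p hp ↦ ?_
  have := helicoidRoot_pos h1.ne' h21 hp.1 p.2
  positivity

theorem continuous_helicoidIntegrand (h1 : 0 < l1) (h21 : |l2| ≤ |l1|) (hK : K < 1) :
    Continuous (helicoidIntegrand l1 l2 K) :=
  (continuousOn_helicoidIntegrand h1 h21).comp_continuous (f := fun w ↦ (K, w)) (by fun_prop)
    fun w ↦ ⟨hK, mem_univ w⟩

theorem helicoidIntegrand_eq_mul_div_sub_one (h1 : 0 < l1) (h21 : |l2| ≤ |l1|) (h2 : l2 ≠ 0)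
    (hK : K < 1) (w : ℝ) :
    helicoidIntegrand l1 l2 K w =
      2 * l1 * l2 / ellipseForm l1 l2 w * (l1 / helicoidRoot l1 l2 K w - 1) := by
  have hform : 0 < ellipseForm l1 l2 w := ellipseForm_pos h1.ne' h2 w
  have hroot : 0 < helicoidRoot l1 l2 K w := helicoidRoot_pos h1.ne' h21 hK w
  have hsq := helicoidRoot_sq h21 hK.le w
  rw [helicoidIntegrand]
  field_simp
  linear_combination hsq

theorem strictMonoOn_helicoidIntegrand (h2 : 0 < l2) (h21 : l2 ≤ l1) (w : ℝ) :
    StrictMonoOn (fun K ↦ helicoidIntegrand l1 l2 K w) (Iio 1) := by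
  intro K hK L hL hKL
  have h1 : 0 < l1 := h2.trans_le h21
  have h21' : |l2| ≤ |l1| := abs_le_abs_of_nonneg h2.le h21
  have hform : 0 < ellipseForm l1 l2 w := ellipseForm_pos h1.ne' h2.ne' w
  have hroot : 0 < helicoidRoot l1 l2 L w := helicoidRoot_pos h1.ne' h21' hL w
  have hlt : helicoidRoot l1 l2 L w < helicoidRoot l1 l2 K w :=
    strictAntiOn_helicoidRoot h2.ne' h21' w (Iio_subset_Iic_self hK) (Iio_subset_Iic_self hL) hKL
  simp only [helicoidIntegrand_eq_mul_div_sub_one h1 h21' h2.ne' hK,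
    helicoidIntegrand_eq_mul_div_sub_one h1 h21' h2.ne' hL]
  gcongr

theorem mul_inv_sqrt_add_abs_le_helicoidIntegrand (h2 : 0 ≤ l2) (h1 : 0 < l1) (h21 : l2 ≤ l1)
    (hK : K ∈ Ico 0 1) (w : ℝ) :
    K * (l2 / l1) * (√(1 - K) + |w|)⁻¹ ≤ helicoidIntegrand l1 l2 K w := by
  have hK0 : 0 ≤ K := hK.1
  have hsqrt : 0 < √(1 - K) := sqrt_pos.2 (sub_pos.2 hK.2)
  have hroot : 0 < helicoidRoot l1 l2 K w :=
    helicoidRoot_pos h1.ne' (abs_le_abs_of_nonneg h2 h21) hK.2 w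
  calc K * (l2 / l1) * (√(1 - K) + |w|)⁻¹
      = 2 * l1 * l2 * K / (l1 * (√(1 - K) + |w|) * (l1 + l1)) := by field_simp; ring
    _ ≤ helicoidIntegrand l1 l2 K w := by
        unfold helicoidIntegrand
        gcongr
        · exact helicoidRoot_le_mul_sqrt_add_abs h1.le hK0 hK.2.le w
        · exact helicoidRoot_le h1.le hK0 w

end HelicoidIntegrand

section HelicoidPeriod

variable {l1 l2 K : ℝ}

theorem continuousOn_helicoidPeriod (h1 : 0 < l1) (h21 : |l2| ≤ |l1|) :
    ContinuousOn (helicoidPeriod l1 l2) (Iio 1) :=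
  continuousOn_intervalIntegral_of_continuousOn_prod (continuousOn_helicoidIntegrand h1 h21) 0 π

theorem strictMonoOn_helicoidPeriod (h2 : 0 < l2) (h21 : l2 ≤ l1) :
    StrictMonoOn (helicoidPeriod l1 l2) (Iio 1) :=
  strictMonoOn_intervalIntegral pi_pos
    (fun _ hK ↦ (continuous_helicoidIntegrand (h2.trans_le h21)
      (abs_le_abs_of_nonneg h2.le h21) hK).continuousOn)
    fun w _ ↦ strictMonoOn_helicoidIntegrand h2 h21 w

theorem mul_log_le_helicoidPeriod (h2 : 0 ≤ l2) (h1 : 0 < l1) (h21 : l2 ≤ l1)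
    (hK : K ∈ Ico 0 1) :
    K * (l2 / l1) * log (1 + π / √(1 - K)) ≤ helicoidPeriod l1 l2 K := by
  have hsqrt : 0 < √(1 - K) := sqrt_pos.2 (sub_pos.2 hK.2)
  have hcont : ContinuousOn (fun w ↦ K * (l2 / l1) * (√(1 - K) + w)⁻¹) (Icc 0 π) :=
    continuousOn_const.mul <| ContinuousOn.inv₀ (by fun_prop) fun w hw ↦
      (add_pos_of_pos_of_nonneg hsqrt hw.1).ne'
  rw [← integral_inv_const_add hsqrt pi_pos.le, ← intervalIntegral.integral_const_mul,
    helicoidPeriod_eq_integral_helicoidIntegrand]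
  refine intervalIntegral.integral_mono_on pi_pos.le
    (hcont.intervalIntegrable_of_Icc pi_pos.le)
    ((continuous_helicoidIntegrand h1 (abs_le_abs_of_nonneg h2 h21) hK.2).intervalIntegrable 0 π)
    fun w hw ↦ ?_
  simpa only [abs_of_nonneg hw.1] using mul_inv_sqrt_add_abs_le_helicoidIntegrand h2 h1 h21 hK w

theorem tendsto_helicoidPeriod_atTop (h2 : 0 < l2) (h21 : l2 ≤ l1) :
    Tendsto (helicoidPeriod l1 l2) (𝓝[<] 1) atTop := by
  have h1 : 0 < l1 := h2.trans_le h21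
  have hcoeff : Tendsto (fun K : ℝ ↦ K * (l2 / l1)) (𝓝[<] 1) (𝓝 (1 * (l2 / l1))) :=
    (tendsto_id.mono_left nhdsWithin_le_nhds).mul_const _
  refine tendsto_atTop_mono' _ ?_
    (hcoeff.pos_mul_atTop (by positivity) (tendsto_log_one_add_div_sqrt_one_sub pi_pos))
  filter_upwards [Ico_mem_nhdsLT zero_lt_one] with K hK
    using mul_log_le_helicoidPeriod h2.le h1 h21 hK

theorem bijOn_helicoidPeriod (h2 : 0 < l2) (h21 : l2 ≤ l1) :
    BijOn (helicoidPeriod l1 l2) (Ioo 0 1) (Ioi 0) := by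
  simpa only [helicoidPeriod_zero] using bijOn_Ioo_Ioi_of_strictMonoOn_of_tendsto_atTop zero_lt_one
    ((strictMonoOn_helicoidPeriod h2 h21).mono Ico_subset_Iio_self)
    ((continuousOn_helicoidPeriod (h2.trans_le h21) (abs_le_abs_of_nonneg h2.le h21)).mono
      Ico_subset_Iio_self)
    (tendsto_helicoidPeriod_atTop h2 h21)

end HelicoidPeriod

theorem helicoidPeriod_strictMono_and_surjective
    (l1 l2 : ℝ) (hl : l1 ≥ l2) (hl2 : l2 > 0) :
    StrictMonoOn (helicoidPeriod l1 l2) (Set.Ioo 0 1) ∧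
    ∀ T > 0, ∃! K, K ∈ Set.Ioo (0 : ℝ) 1 ∧ helicoidPeriod l1 l2 K = T := by
  refine ⟨(strictMonoOn_helicoidPeriod hl2 hl).mono Ioo_subset_Iio_self, fun T hT ↦ ?_⟩
  have hbij := bijOn_helicoidPeriod hl2 hl
  obtain ⟨K, hK, hKT⟩ := hbij.surjOn hT
  exact ⟨K, ⟨hK, hKT⟩, fun L hL ↦ hbij.injOn hL.1 hK (hL.2.trans hKT.symm)⟩
end

section
/- Let λ₁ ≥ λ₂ > 0, c > 0 and θ ∈ ℝ with |θ| < θ_c⁺, where θ_c⁺ = π if c > √2·λ₁ and θ_c⁺ = arccos(1 − c²/λ₁²) if 0 < c ≤ √2·λ₁. Then for every B ∈ [λ₂², λ₁²] one has c² + 2·cos θ·B − (sin²θ/c²)·B² > 0. -/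
open Real

/-- The critical angle `θ_c⁺`. -/
noncomputable def thetaPlus (l1 c : ℝ) : ℝ :=
  if c > Real.sqrt 2 * l1 then π else Real.arccos (1 - c ^ 2 / l1 ^ 2)

/-!
With `a = c ^ 2` the quadratic factors as
`a + 2 cos θ B - sin² θ / a * B ^ 2 = (a - (1 - cos θ) B) (a + (1 + cos θ) B) / a`,
so for `B ≥ 0` it is positive as soon as `(1 - cos θ) B < a`. If `c ≤ √2 λ₁`, the critical
angle is where this first fails at the endpoint `B = λ₁ ^ 2`; for larger `c` it never fails.
-/

theorem lt_cos_of_abs_lt_arccos {x θ : ℝ} (h : |θ| < arccos x) : x < cos θ := by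
  contrapose! h
  rcases le_total |θ| π with hθ | hθ
  · calc
      arccos x ≤ arccos (cos θ) := antitone_arccos h
      _ = arccos (cos |θ|) := by rw [cos_abs]
      _ = |θ| := arccos_cos (abs_nonneg θ) hθ
  · exact (arccos_le_pi x).trans hθ

-- Past `√2 * l1` the argument drops below `-1`, where `Real.arccos` is constantly `π`.
theorem thetaPlus_eq_arccos {l1 : ℝ} (hl1 : 0 < l1) (c : ℝ) :
    thetaPlus l1 c = arccos (1 - c ^ 2 / l1 ^ 2) := by
  unfold thetaPlus
  split_ifs with hc
  · have two_mul_lt : 2 * l1 ^ 2 < c ^ 2 := by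
      calc
        2 * l1 ^ 2 = (√2 * l1) ^ 2 := by rw [mul_pow, sq_sqrt zero_le_two]
        _ < c ^ 2 := pow_lt_pow_left₀ hc (by positivity) two_ne_zero
    have two_lt : 2 < c ^ 2 / l1 ^ 2 := (lt_div_iff₀ (by positivity)).2 two_mul_lt
    exact (arccos_of_le_neg_one (by linarith)).symm
  · rfl

theorem one_sub_cos_mul_sq_lt_of_abs_lt_thetaPlus {l1 c θ : ℝ} (hl1 : 0 < l1)
    (hθ : |θ| < thetaPlus l1 c) : (1 - cos θ) * l1 ^ 2 < c ^ 2 := by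
  rw [thetaPlus_eq_arccos hl1] at hθ
  rw [← lt_div_iff₀ (by positivity)]
  exact sub_lt_comm.1 (lt_cos_of_abs_lt_arccos hθ)

theorem add_two_mul_cos_mul_sub_sin_sq_div_mul_sq {a : ℝ} (ha : a ≠ 0) (θ B : ℝ) :
    a + 2 * cos θ * B - sin θ ^ 2 / a * B ^ 2 =
      (a - (1 - cos θ) * B) * (a + (1 + cos θ) * B) / a := by
  rw [sin_sq]
  field_simp
  ring

theorem add_two_mul_cos_mul_sub_sin_sq_div_mul_sq_pos {a θ B : ℝ} (hB : 0 ≤ B)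
    (h : (1 - cos θ) * B < a) : 0 < a + 2 * cos θ * B - sin θ ^ 2 / a * B ^ 2 := by
  have ha : 0 < a := (mul_nonneg (sub_nonneg.2 (cos_le_one θ)) hB).trans_lt h
  have one_add_cos_nonneg : 0 ≤ 1 + cos θ := by linarith [neg_one_le_cos θ]
  rw [add_two_mul_cos_mul_sub_sin_sq_div_mul_sq ha.ne']
  exact div_pos (mul_pos (sub_pos.2 h) (by positivity)) ha

theorem catenoid_P_positive
    (l1 l2 c θ : ℝ) (hl : l1 ≥ l2) (hl2 : l2 > 0) (hc : c > 0)
    (hθ : |θ| < thetaPlus l1 c) :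
    ∀ B ∈ Set.Icc (l2 ^ 2) (l1 ^ 2),
      c ^ 2 + 2 * Real.cos θ * B - (Real.sin θ ^ 2 / c ^ 2) * B ^ 2 > 0 := by
  intro B hB
  have hl1 : 0 < l1 := hl2.trans_le hl
  have B_nonneg : 0 ≤ B := (sq_nonneg l2).trans hB.1
  apply add_two_mul_cos_mul_sub_sin_sq_div_mul_sq_pos B_nonneg
  calc
    (1 - cos θ) * B ≤ (1 - cos θ) * l1 ^ 2 :=
      mul_le_mul_of_nonneg_left hB.2 (sub_nonneg.2 (cos_le_one θ))
    _ < c ^ 2 := one_sub_cos_mul_sq_lt_of_abs_lt_thetaPlus hl1 hθ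
end

section
/- Let φ : ℝ → ℝ be differentiable with φ(0) = 0 and φ'(u) = √(c² + 2·cos θ·B(u) − D²·B(u)²) for all u, where B(u) = λ₁²·cos²(φ u) + λ₂²·sin²(φ u) and D = sin θ / c. Then there exist constants a₁, a₂ > 0 with a₁ ≤ φ'(u) ≤ a₂ for all u, and φ is strictly increasing and is a bijection from ℝ to ℝ. -/
open Real

/-- The quantity `B(u) = λ₁² cos²(φ u) + λ₂² sin²(φ u)`. -/
noncomputable def Bfun (l1 l2 : ℝ) (φ : ℝ → ℝ) (u : ℝ) : ℝ :=
  l1 ^ 2 * Real.cos (φ u) ^ 2 + l2 ^ 2 * Real.sin (φ u) ^ 2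

/-!
The radicand factors as `(c² - (1 - cos θ) b) (c² + (1 + cos θ) b) / c²` with `b = B(u)`. The
condition `|θ| < θ_c⁺` keeps the first factor positive up to `b = λ₁²`, an upper bound of `B`, while
the second factor is at least `c²`. Hence `φ'` is bounded below by a positive constant, so `φ` grows
at least linearly in both directions.
-/

open Set Filter

section LinearGrowth

variable {f : ℝ → ℝ} {a : ℝ}

theorem differentiable_of_pos_of_le_deriv (ha : 0 < a) (hf : ∀ x, a ≤ deriv f x) :
    Differentiable ℝ f := fun x =>
  differentiableAt_of_deriv_ne_zero (ha.trans_le (hf x)).ne'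

theorem tendsto_atTop_of_pos_of_le_deriv (ha : 0 < a) (hf : ∀ x, a ≤ deriv f x) :
    Tendsto f atTop atTop := by
  have linear_lower_bound : ∀ᶠ x in atTop, f 0 + a * x ≤ f x := by
    filter_upwards [eventually_ge_atTop 0] with x hx
    linarith [mul_sub_le_image_sub_of_le_deriv (differentiable_of_pos_of_le_deriv ha hf) hf hx]
  exact tendsto_atTop_mono' _ linear_lower_bound
    (tendsto_atTop_add_const_left _ _ (tendsto_id.const_mul_atTop ha))

theorem tendsto_atBot_of_pos_of_le_deriv (ha : 0 < a) (hf : ∀ x, a ≤ deriv f x) :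
    Tendsto f atBot atBot := by
  have linear_upper_bound : ∀ᶠ x in atBot, f x ≤ f 0 + a * x := by
    filter_upwards [eventually_le_atBot 0] with x hx
    linarith [mul_sub_le_image_sub_of_le_deriv (differentiable_of_pos_of_le_deriv ha hf) hf hx]
  exact tendsto_atBot_mono' _ linear_upper_bound
    (tendsto_atBot_add_const_left _ _ (tendsto_id.const_mul_atBot ha))

theorem surjective_of_pos_of_le_deriv (ha : 0 < a) (hf : ∀ x, a ≤ deriv f x) :
    Function.Surjective f :=
  (differentiable_of_pos_of_le_deriv ha hf).continuous.surjective
    (tendsto_atTop_of_pos_of_le_deriv ha hf) (tendsto_atBot_of_pos_of_le_deriv ha hf)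

end LinearGrowth

/-- The radicand `c² + 2 cos θ b - D² b²`, `D = sin θ / c`, in the equation for `φ'`, as a function
of the value `b` of `B`. -/
noncomputable def catenoidRadicand (c θ b : ℝ) : ℝ :=
  c ^ 2 + 2 * cos θ * b - (sin θ / c) ^ 2 * b ^ 2

section Radicand

variable {c θ b m : ℝ}

theorem catenoidRadicand_eq_mul_div (hc : c ≠ 0) :
    catenoidRadicand c θ b =
      (c ^ 2 - (1 - cos θ) * b) * (c ^ 2 + (1 + cos θ) * b) / c ^ 2 := by
  rw [catenoidRadicand, div_pow, sin_sq]
  field_simp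
  ring

theorem le_catenoidRadicand (hc : c ≠ 0) (hb : b ∈ Icc 0 m) (hm : (1 - cos θ) * m ≤ c ^ 2) :
    c ^ 2 - (1 - cos θ) * m ≤ catenoidRadicand c θ b := by
  have first_factor : c ^ 2 - (1 - cos θ) * m ≤ c ^ 2 - (1 - cos θ) * b :=
    sub_le_sub_left (mul_le_mul_of_nonneg_left hb.2 (sub_nonneg.2 (cos_le_one θ))) _
  have second_factor : c ^ 2 ≤ c ^ 2 + (1 + cos θ) * b :=
    le_add_of_nonneg_right (mul_nonneg (by linarith [neg_one_le_cos θ]) hb.1)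
  rw [catenoidRadicand_eq_mul_div hc, le_div_iff₀ (by positivity)]
  exact mul_le_mul first_factor second_factor (sq_nonneg c)
    ((sub_nonneg.2 hm).trans first_factor)

theorem catenoidRadicand_le (hb : b ∈ Icc 0 m) :
    catenoidRadicand c θ b ≤ c ^ 2 + 2 * m :=
  calc catenoidRadicand c θ b
    _ ≤ c ^ 2 + 2 * cos θ * b := sub_le_self _ (by positivity)
    _ ≤ c ^ 2 + 2 * b := by linarith [mul_le_of_le_one_left hb.1 (cos_le_one θ)]
    _ ≤ c ^ 2 + 2 * m := by linarith [hb.2]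

end Radicand

theorem one_sub_cos_mul_sq_lt_sq {l c θ : ℝ} (hl : 0 ≤ l) (hc : 0 < c)
    (hθ : |θ| < thetaPlus l c) : (1 - cos θ) * l ^ 2 < c ^ 2 := by
  have sq_threshold : (√2 * l) ^ 2 = 2 * l ^ 2 := by rw [mul_pow, sq_sqrt zero_le_two]
  rw [thetaPlus] at hθ
  split_ifs at hθ with h
  · calc (1 - cos θ) * l ^ 2
      _ ≤ 2 * l ^ 2 := by gcongr; linarith [neg_one_le_cos θ]
      _ = (√2 * l) ^ 2 := sq_threshold.symm
      _ < c ^ 2 := by gcongr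
  · have hcl : c ≤ √2 * l := not_lt.1 h
    have hl_pos : 0 < l := pos_of_mul_pos_right (hc.trans_le hcl) (sqrt_nonneg 2)
    have ratio_nonneg : 0 ≤ c ^ 2 / l ^ 2 := by positivity
    have ratio_le_two : c ^ 2 / l ^ 2 ≤ 2 := by
      rw [div_le_iff₀ (by positivity), ← sq_threshold]
      gcongr
    have cos_lt : 1 - c ^ 2 / l ^ 2 < cos θ := by
      have := cos_lt_cos_of_nonneg_of_le_pi (abs_nonneg θ) (arccos_le_pi _) hθ
      rwa [cos_abs, cos_arccos (by linarith) (by linarith)] at this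
    exact (lt_div_iff₀ (by positivity)).1 (sub_lt_comm.1 cos_lt)

theorem Bfun_mem_Icc {l1 l2 : ℝ} (hl : l2 ^ 2 ≤ l1 ^ 2) (φ : ℝ → ℝ) (u : ℝ) :
    Bfun l1 l2 φ u ∈ Icc 0 (l1 ^ 2) := by
  rw [Bfun]
  refine ⟨by positivity, ?_⟩
  calc l1 ^ 2 * cos (φ u) ^ 2 + l2 ^ 2 * sin (φ u) ^ 2
    _ ≤ l1 ^ 2 * cos (φ u) ^ 2 + l1 ^ 2 * sin (φ u) ^ 2 := by gcongr
    _ = l1 ^ 2 := by rw [← mul_add, cos_sq_add_sin_sq, mul_one]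

theorem catenoid_phi_increasing_bijective_general {l c θ : ℝ} (hl : 0 ≤ l) (hc : 0 < c)
    (hθ : |θ| < thetaPlus l c) {φ B : ℝ → ℝ} (hB : ∀ u, B u ∈ Icc 0 (l ^ 2))
    (hφ' : ∀ u, deriv φ u = √(catenoidRadicand c θ (B u))) :
    (∃ a1 > 0, ∃ a2 > 0, ∀ u, a1 ≤ deriv φ u ∧ deriv φ u ≤ a2) ∧
    StrictMono φ ∧ Function.Bijective φ := by
  have hlc : (1 - cos θ) * l ^ 2 < c ^ 2 := one_sub_cos_mul_sq_lt_sq hl hc hθ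
  have ha : 0 < √(c ^ 2 - (1 - cos θ) * l ^ 2) := sqrt_pos.2 (sub_pos.2 hlc)
  have lower u : √(c ^ 2 - (1 - cos θ) * l ^ 2) ≤ deriv φ u :=
    hφ' u ▸ sqrt_le_sqrt (le_catenoidRadicand hc.ne' (hB u) hlc.le)
  have upper u : deriv φ u ≤ √(c ^ 2 + 2 * l ^ 2) :=
    hφ' u ▸ sqrt_le_sqrt (catenoidRadicand_le (hB u))
  have strictMono : StrictMono φ := strictMono_of_deriv_pos fun u => ha.trans_le (lower u)
  exact ⟨⟨_, ha, _, sqrt_pos.2 (by positivity), fun u => ⟨lower u, upper u⟩⟩,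
    strictMono, strictMono.injective, surjective_of_pos_of_le_deriv ha lower⟩

theorem catenoid_phi_increasing_bijective
    (l1 l2 c θ : ℝ) (hl : l1 ≥ l2) (hl2 : l2 > 0) (hc : c > 0)
    (hθ : |θ| < thetaPlus l1 c)
    (φ : ℝ → ℝ) (hφ : Differentiable ℝ φ) (hφ0 : φ 0 = 0)
    (hφ' : ∀ u, deriv φ u =
      Real.sqrt (c ^ 2 + 2 * Real.cos θ * Bfun l1 l2 φ u -
        (Real.sin θ / c) ^ 2 * Bfun l1 l2 φ u ^ 2)) :
    (∃ a1 > 0, ∃ a2 > 0, ∀ u, a1 ≤ deriv φ u ∧ deriv φ u ≤ a2) ∧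
    StrictMono φ ∧ Function.Bijective φ :=
  catenoid_phi_increasing_bijective_general (hl2.le.trans hl) hc hθ
    (Bfun_mem_Icc (pow_le_pow_left₀ hl2.le hl 2) φ) hφ'
end

section
/- Let φ : ℝ → ℝ be differentiable with φ(0) = 0 and φ'(u) = √(c² + 2·cos θ·B(u) − D²·B(u)²) for all u, where B(u) = λ₁²·cos²(φ u) + λ₂²·sin²(φ u) and D = sin θ / c, and let f : ℝ → ℝ be differentiable with f(0) = 0 and f'(u) = D·B(u). Define g : ℝ × ℝ → ℂ by g(u,v) = exp(f(u) + c·v)·(cos(φ u) + i·sin(φ u)), let g_u, g_v denote the partial derivatives of g, set g_z = (g_u − i·g_v)/2 and g_z̄ = (g_u + i·g_v)/2, and set g_{zz̄} = (g_{uu} + g_{vv})/4. Then at every point (u,v): (1) g_{zz̄}·[λ₁²·(g + conj g)² − λ₂²·(g − conj g)²] = 2·[λ₁²·(g + conj g) − λ₂²·(g − conj g)]·g_z·g_z̄; and (2) g_z·conj(g_z̄) = (1/8)·(cos θ − i·sin θ)·[λ₁²·(g + conj g)² − λ₂²·(g − conj g)²]. -/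
open Real Complex

/-- The Gauss map `g(u+iv) = e^{f(u)+cv} e^{i φ(u)}` of the catenoidal surface. -/
noncomputable def catGauss (c : ℝ) (f φ : ℝ → ℝ) (u v : ℝ) : ℂ :=
  (Real.exp (f u + c * v) : ℂ) * ((Real.cos (φ u) : ℂ) + Complex.I * (Real.sin (φ u) : ℂ))

/-- Partial derivative in `u`. -/
noncomputable def catGauss_u (c : ℝ) (f φ : ℝ → ℝ) (u v : ℝ) : ℂ :=
  deriv (fun t => catGauss c f φ t v) u

/-- Partial derivative in `v`. -/
noncomputable def catGauss_v (c : ℝ) (f φ : ℝ → ℝ) (u v : ℝ) : ℂ :=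
  deriv (fun t => catGauss c f φ u t) v

/-- Second partial derivative in `u`. -/
noncomputable def catGauss_uu (c : ℝ) (f φ : ℝ → ℝ) (u v : ℝ) : ℂ :=
  deriv (fun t => catGauss_u c f φ t v) u

/-- Second partial derivative in `v`. -/
noncomputable def catGauss_vv (c : ℝ) (f φ : ℝ → ℝ) (u v : ℝ) : ℂ :=
  deriv (fun t => catGauss_v c f φ u t) v

/-- Wirtinger derivative `g_z = (g_u - i g_v)/2`. -/
noncomputable def catGauss_z (c : ℝ) (f φ : ℝ → ℝ) (u v : ℝ) : ℂ :=
  (catGauss_u c f φ u v - Complex.I * catGauss_v c f φ u v) / 2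

/-- Wirtinger derivative `g_z̄ = (g_u + i g_v)/2`. -/
noncomputable def catGauss_zbar (c : ℝ) (f φ : ℝ → ℝ) (u v : ℝ) : ℂ :=
  (catGauss_u c f φ u v + Complex.I * catGauss_v c f φ u v) / 2

/-- Mixed Wirtinger derivative `g_{z z̄} = (g_{uu} + g_{vv})/4`. -/
noncomputable def catGauss_zzbar (c : ℝ) (f φ : ℝ → ℝ) (u v : ℝ) : ℂ :=
  (catGauss_uu c f φ u v + catGauss_vv c f φ u v) / 4

/-!
Write `g = exp (h(u) + c v)` with `h = f + i φ`. Then `g_u = h' g` and `g_v = c g`, so every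
Wirtinger derivative of `g` is `g` times a polynomial in `ω = h'`, `ω'` and `c`. Since the two
brackets built from `g` and `conj g` are `4 |g|² B` and `2 |g|² (B + i K) / g`, where `-2 K` is the
derivative of `B` with respect to `φ`, the two claims reduce to

* `ω' B = i K (ω² + c²)`,
* `(ω - i c) (conj ω - i c) = 2 (cos θ - i sin θ) B`.

Both are algebraic consequences of `ω = D B + i φ'` and `φ'² = c² + 2 cos θ B - D² B²`, once `φ'` is
known not to vanish and can therefore be differentiated. With `D = sin θ / c` one has
`c² φ'² = (c² + (1 + cos θ) B) (c² - (1 - cos θ) B)`, and the bound on `|θ|` says that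
`(1 - cos θ) λ₁² < c²`, while `0 ≤ B ≤ λ₁²`.
-/

/-- The complex phase `h = f + i φ`, a logarithm of the Gauss map along `v = 0`. -/
noncomputable def catPhase (f φ : ℝ → ℝ) (u : ℝ) : ℂ :=
  f u + φ u * I

/-- The quantity `K(u) = (λ₁² - λ₂²) cos (φ u) sin (φ u)`, which is `-1/2` times the derivative of
`B` with respect to `φ`. -/
noncomputable def Kfun (l1 l2 : ℝ) (φ : ℝ → ℝ) (u : ℝ) : ℝ :=
  (l1 ^ 2 - l2 ^ 2) * Real.cos (φ u) * Real.sin (φ u)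

/-- The square of `φ'` prescribed by the catenoidal equation, as a function of the value `B`.
The paper's case is `a = cos θ` and `D = sin θ / c`. -/
def phaseSpeedSq (c a D B : ℝ) : ℝ :=
  c ^ 2 + 2 * a * B - D ^ 2 * B ^ 2

/-- The derivative `ω = f' + i φ'` of the complex phase prescribed by the catenoidal equations. -/
noncomputable def catPhaseDeriv (l1 l2 c a D : ℝ) (φ : ℝ → ℝ) (u : ℝ) : ℂ :=
  catPhase (fun t => D * Bfun l1 l2 φ t) (fun t => √(phaseSpeedSq c a D (Bfun l1 l2 φ t))) u

section Brackets

theorem sq_add_conj_sub_sq_sub_conj (l1 l2 : ℝ) (w : ℂ) :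
    (l1 : ℂ) ^ 2 * (w + (starRingEnd ℂ) w) ^ 2 - (l2 : ℂ) ^ 2 * (w - (starRingEnd ℂ) w) ^ 2 =
      4 * ((l1 ^ 2 * w.re ^ 2 + l2 ^ 2 * w.im ^ 2 : ℝ) : ℂ) := by
  rw [add_conj, sub_conj]
  push_cast
  linear_combination (-4 * (l2 : ℂ) ^ 2 * w.im ^ 2) * I_sq

theorem mul_add_conj_sub_sub_conj (l1 l2 : ℝ) (w : ℂ) :
    w * ((l1 : ℂ) ^ 2 * (w + (starRingEnd ℂ) w) - (l2 : ℂ) ^ 2 * (w - (starRingEnd ℂ) w)) =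
      2 * (((l1 ^ 2 * w.re ^ 2 + l2 ^ 2 * w.im ^ 2 : ℝ) : ℂ) +
        ((l1 ^ 2 - l2 ^ 2) * w.re * w.im : ℝ) * I) := by
  rw [add_conj, sub_conj]
  nth_rw 1 [← re_add_im w]
  push_cast
  linear_combination (-2 * (l2 : ℂ) ^ 2 * w.im ^ 2) * I_sq

variable (l1 l2 c : ℝ) (f φ : ℝ → ℝ) (u v : ℝ)

theorem catGauss_re : (catGauss c f φ u v).re = Real.exp (f u + c * v) * Real.cos (φ u) := by
  simp [catGauss, -ofReal_exp, -ofReal_cos, -ofReal_sin]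

theorem catGauss_im : (catGauss c f φ u v).im = Real.exp (f u + c * v) * Real.sin (φ u) := by
  simp [catGauss, -ofReal_exp, -ofReal_cos, -ofReal_sin]

theorem normSq_catGauss : normSq (catGauss c f φ u v) = Real.exp (f u + c * v) ^ 2 := by
  rw [normSq_apply, catGauss_re, catGauss_im]
  linear_combination Real.exp (f u + c * v) ^ 2 * Real.sin_sq_add_cos_sq (φ u)

theorem catGauss_sq_bracket :
    (l1 : ℂ) ^ 2 * (catGauss c f φ u v + (starRingEnd ℂ) (catGauss c f φ u v)) ^ 2 -
        (l2 : ℂ) ^ 2 * (catGauss c f φ u v - (starRingEnd ℂ) (catGauss c f φ u v)) ^ 2 =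
      4 * normSq (catGauss c f φ u v) * Bfun l1 l2 φ u := by
  rw [sq_add_conj_sub_sq_sub_conj, normSq_catGauss, catGauss_re, catGauss_im, Bfun]
  push_cast
  ring

theorem catGauss_mul_bracket :
    catGauss c f φ u v *
        ((l1 : ℂ) ^ 2 * (catGauss c f φ u v + (starRingEnd ℂ) (catGauss c f φ u v)) -
          (l2 : ℂ) ^ 2 * (catGauss c f φ u v - (starRingEnd ℂ) (catGauss c f φ u v))) =
      2 * normSq (catGauss c f φ u v) * (Bfun l1 l2 φ u + Kfun l1 l2 φ u * I) := by
  rw [mul_add_conj_sub_sub_conj, normSq_catGauss, catGauss_re, catGauss_im, Bfun, Kfun]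
  push_cast
  ring

end Brackets

section WirtingerDerivatives

variable {c : ℝ} {f φ : ℝ → ℝ} {u v : ℝ}

theorem hasDerivAt_catPhase {f' φ' : ℝ} (hf : HasDerivAt f f' u) (hφ : HasDerivAt φ φ' u) :
    HasDerivAt (catPhase f φ) (f' + φ' * I) u :=
  hf.ofReal_comp.add (hφ.ofReal_comp.mul_const I)

theorem catGauss_eq_exp (c : ℝ) (f φ : ℝ → ℝ) (u v : ℝ) :
    catGauss c f φ u v = Complex.exp (catPhase f φ u + c * v) := by
  rw [catGauss, catPhase, add_right_comm, Complex.exp_add, exp_mul_I]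
  push_cast
  ring

theorem hasDerivAt_catGauss_left {ω : ℂ} (hω : HasDerivAt (catPhase f φ) ω u) :
    HasDerivAt (fun t => catGauss c f φ t v) (catGauss c f φ u v * ω) u := by
  simpa only [catGauss_eq_exp] using (hω.add_const ((c : ℂ) * v)).cexp

theorem hasDerivAt_catGauss_right :
    HasDerivAt (fun t => catGauss c f φ u t) (catGauss c f φ u v * c) v := by
  have h_exponent : HasDerivAt (fun t : ℝ => catPhase f φ u + c * t) (c : ℂ) v := by
    simpa using ((hasDerivAt_id v).ofReal_comp.const_mul (c : ℂ)).const_add (catPhase f φ u)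
  simpa only [catGauss_eq_exp] using h_exponent.cexp

theorem catGauss_v_eq : catGauss_v c f φ u v = catGauss c f φ u v * c :=
  hasDerivAt_catGauss_right.deriv

theorem catGauss_vv_eq : catGauss_vv c f φ u v = catGauss c f φ u v * c ^ 2 := by
  simp only [catGauss_vv, catGauss_v_eq]
  rw [(hasDerivAt_catGauss_right.mul_const (c : ℂ)).deriv]
  ring

theorem catGauss_u_eq {ω : ℂ} (hω : HasDerivAt (catPhase f φ) ω u) :
    catGauss_u c f φ u v = catGauss c f φ u v * ω :=
  (hasDerivAt_catGauss_left hω).deriv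

theorem catGauss_uu_eq {ω : ℝ → ℂ} {ω' : ℂ} (hω : ∀ t, HasDerivAt (catPhase f φ) (ω t) t)
    (hω' : HasDerivAt ω ω' u) :
    catGauss_uu c f φ u v = catGauss c f φ u v * (ω u ^ 2 + ω') := by
  simp only [catGauss_uu, catGauss_u_eq (hω _)]
  rw [((hasDerivAt_catGauss_left (hω u)).fun_mul hω').deriv]
  ring

theorem catGauss_z_eq {ω : ℂ} (hω : HasDerivAt (catPhase f φ) ω u) :
    catGauss_z c f φ u v = catGauss c f φ u v * (ω - I * c) / 2 := by
  rw [catGauss_z, catGauss_u_eq hω, catGauss_v_eq]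
  ring

theorem catGauss_zbar_eq {ω : ℂ} (hω : HasDerivAt (catPhase f φ) ω u) :
    catGauss_zbar c f φ u v = catGauss c f φ u v * (ω + I * c) / 2 := by
  rw [catGauss_zbar, catGauss_u_eq hω, catGauss_v_eq]
  ring

theorem catGauss_zzbar_eq {ω : ℝ → ℂ} {ω' : ℂ} (hω : ∀ t, HasDerivAt (catPhase f φ) (ω t) t)
    (hω' : HasDerivAt ω ω' u) :
    catGauss_zzbar c f φ u v = catGauss c f φ u v * (ω u ^ 2 + c ^ 2 + ω') / 4 := by
  rw [catGauss_zzbar, catGauss_uu_eq hω hω', catGauss_vv_eq]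
  ring

end WirtingerDerivatives

section ReductionToPhase

variable {l1 l2 c : ℝ} {f φ : ℝ → ℝ} {u : ℝ}

theorem catGauss_harmonic_of_phase {ω : ℝ → ℂ} {ω' : ℂ}
    (hω : ∀ t, HasDerivAt (catPhase f φ) (ω t) t) (hω' : HasDerivAt ω ω' u)
    (h_ode : ω' * Bfun l1 l2 φ u = I * Kfun l1 l2 φ u * (ω u ^ 2 + c ^ 2)) (v : ℝ) :
    catGauss_zzbar c f φ u v *
        ((l1 : ℂ) ^ 2 * (catGauss c f φ u v + (starRingEnd ℂ) (catGauss c f φ u v)) ^ 2 -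
          (l2 : ℂ) ^ 2 * (catGauss c f φ u v - (starRingEnd ℂ) (catGauss c f φ u v)) ^ 2) =
      2 * ((l1 : ℂ) ^ 2 * (catGauss c f φ u v + (starRingEnd ℂ) (catGauss c f φ u v)) -
          (l2 : ℂ) ^ 2 * (catGauss c f φ u v - (starRingEnd ℂ) (catGauss c f φ u v))) *
        catGauss_z c f φ u v * catGauss_zbar c f φ u v := by
  rw [catGauss_sq_bracket, catGauss_zzbar_eq hω hω', catGauss_z_eq (hω u), catGauss_zbar_eq (hω u)]
  have h_bracket := catGauss_mul_bracket l1 l2 c f φ u v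
  set g := catGauss c f φ u v
  set L := (l1 : ℂ) ^ 2 * (g + (starRingEnd ℂ) g) - (l2 : ℂ) ^ 2 * (g - (starRingEnd ℂ) g)
  calc g * (ω u ^ 2 + c ^ 2 + ω') / 4 * (4 * normSq g * Bfun l1 l2 φ u)
      = g * normSq g * ((ω u ^ 2 + c ^ 2) * Bfun l1 l2 φ u + ω' * Bfun l1 l2 φ u) := by ring
    _ = g / 2 * (2 * normSq g * (Bfun l1 l2 φ u + Kfun l1 l2 φ u * I)) * (ω u ^ 2 + c ^ 2) := by
      rw [h_ode]; ring
    _ = g / 2 * (g * L) * (ω u ^ 2 - I ^ 2 * c ^ 2) := by rw [h_bracket, I_sq]; ring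
    _ = 2 * L * (g * (ω u - I * c) / 2) * (g * (ω u + I * c) / 2) := by ring

theorem catGauss_hopf_of_phase {ω κ : ℂ} (hω : HasDerivAt (catPhase f φ) ω u)
    (h_ode : (ω - I * c) * ((starRingEnd ℂ) ω - I * c) = 2 * κ * Bfun l1 l2 φ u) (v : ℝ) :
    catGauss_z c f φ u v * (starRingEnd ℂ) (catGauss_zbar c f φ u v) =
      (1 / 8 : ℂ) * κ *
        ((l1 : ℂ) ^ 2 * (catGauss c f φ u v + (starRingEnd ℂ) (catGauss c f φ u v)) ^ 2 -
          (l2 : ℂ) ^ 2 * (catGauss c f φ u v - (starRingEnd ℂ) (catGauss c f φ u v)) ^ 2) := by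
  rw [catGauss_sq_bracket, catGauss_z_eq hω, catGauss_zbar_eq hω]
  set g := catGauss c f φ u v
  have h_conj : (starRingEnd ℂ) (g * (ω + I * c) / 2) =
      (starRingEnd ℂ) g * ((starRingEnd ℂ) ω - I * c) / 2 := by
    simp only [map_div₀, map_mul, map_add, conj_I, conj_ofReal, map_ofNat]
    ring
  calc g * (ω - I * c) / 2 * (starRingEnd ℂ) (g * (ω + I * c) / 2)
      = g * (starRingEnd ℂ) g * ((ω - I * c) * ((starRingEnd ℂ) ω - I * c)) / 4 := by
        rw [h_conj]; ring
    _ = 1 / 8 * κ * (4 * normSq g * Bfun l1 l2 φ u) := by rw [h_ode, mul_conj]; ring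

end ReductionToPhase

section CatenoidalEquations

variable {l1 l2 c a D : ℝ} {φ : ℝ → ℝ} {u : ℝ}

theorem hasDerivAt_Bfun (l1 l2 : ℝ) {φ' : ℝ} (hφ : HasDerivAt φ φ' u) :
    HasDerivAt (Bfun l1 l2 φ) (-2 * Kfun l1 l2 φ u * φ') u := by
  refine (((hφ.cos.pow 2).const_mul (l1 ^ 2)).add
    ((hφ.sin.pow 2).const_mul (l2 ^ 2))).congr_deriv ?_
  rw [Kfun]
  push_cast
  ring

theorem hasDerivAt_phaseSpeedSq (c a D B : ℝ) :
    HasDerivAt (phaseSpeedSq c a D) (2 * (a - D ^ 2 * B)) B := by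
  refine ((((hasDerivAt_id B).const_mul (2 * a)).const_add (c ^ 2)).sub
    (((hasDerivAt_id B).pow 2).const_mul (D ^ 2))).congr_deriv ?_
  simp only [id_eq]
  push_cast
  ring

theorem hasDerivAt_catPhaseDeriv (h_pos : 0 < phaseSpeedSq c a D (Bfun l1 l2 φ u))
    (hφ : HasDerivAt φ √(phaseSpeedSq c a D (Bfun l1 l2 φ u)) u) :
    HasDerivAt (catPhaseDeriv l1 l2 c a D φ)
      (-2 * Kfun l1 l2 φ u * (D * √(phaseSpeedSq c a D (Bfun l1 l2 φ u)) +
        (a - D ^ 2 * Bfun l1 l2 φ u) * I)) u := by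
  have hB := hasDerivAt_Bfun l1 l2 hφ
  have h_speed := ((hasDerivAt_phaseSpeedSq c a D _).comp u hB).sqrt h_pos.ne'
  have h_speed' : HasDerivAt (fun t => √(phaseSpeedSq c a D (Bfun l1 l2 φ t)))
      (-2 * Kfun l1 l2 φ u * (a - D ^ 2 * Bfun l1 l2 φ u)) u := by
    refine h_speed.congr_deriv ?_
    have h_sqrt_ne : √(phaseSpeedSq c a D (Bfun l1 l2 φ u)) ≠ 0 := (Real.sqrt_pos.2 h_pos).ne'
    simp only [Function.comp_apply]
    field_simp
  refine (hasDerivAt_catPhase (hB.const_mul D) h_speed').congr_deriv ?_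
  push_cast
  ring

theorem ofReal_sqrt_sq {x : ℝ} (hx : 0 ≤ x) : ((√x : ℝ) : ℂ) ^ 2 = x :=
  mod_cast Real.sq_sqrt hx

theorem catPhaseDeriv_sq_add_sq (h_nonneg : 0 ≤ phaseSpeedSq c a D (Bfun l1 l2 φ u)) :
    catPhaseDeriv l1 l2 c a D φ u ^ 2 + c ^ 2 =
      -2 * Bfun l1 l2 φ u * (a - D ^ 2 * Bfun l1 l2 φ u -
        D * √(phaseSpeedSq c a D (Bfun l1 l2 φ u)) * I) := by
  have h_sq := ofReal_sqrt_sq h_nonneg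
  rw [catPhaseDeriv, catPhase]
  set q : ℂ := ((√(phaseSpeedSq c a D (Bfun l1 l2 φ u)) : ℝ) : ℂ)
  rw [phaseSpeedSq] at h_sq
  push_cast at h_sq ⊢
  linear_combination q ^ 2 * I_sq - h_sq

theorem catPhaseDeriv_sub_mul_conj_sub (h_nonneg : 0 ≤ phaseSpeedSq c a D (Bfun l1 l2 φ u)) :
    (catPhaseDeriv l1 l2 c a D φ u - I * c) *
        ((starRingEnd ℂ) (catPhaseDeriv l1 l2 c a D φ u) - I * c) =
      2 * (a - I * (c * D : ℝ)) * Bfun l1 l2 φ u := by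
  have h_sq := ofReal_sqrt_sq h_nonneg
  simp only [catPhaseDeriv, catPhase, map_add, map_mul, conj_ofReal, conj_I]
  set q : ℂ := ((√(phaseSpeedSq c a D (Bfun l1 l2 φ u)) : ℝ) : ℂ)
  rw [phaseSpeedSq] at h_sq
  push_cast at h_sq ⊢
  linear_combination h_sq - (q ^ 2 - c ^ 2) * I_sq

end CatenoidalEquations

section SpeedPositivity

variable {l1 l2 c θ B : ℝ}

theorem sq_mul_one_sub_cos_lt_sq (hl1 : 0 ≤ l1) (hc : 0 < c) (hθ : |θ| < thetaPlus l1 c) :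
    l1 ^ 2 * (1 - Real.cos θ) < c ^ 2 := by
  rw [thetaPlus] at hθ
  split_ifs at hθ with h_large
  · calc l1 ^ 2 * (1 - Real.cos θ) ≤ l1 ^ 2 * 2 := by gcongr; linarith [Real.neg_one_le_cos θ]
      _ = (√2 * l1) ^ 2 := by rw [mul_pow, Real.sq_sqrt zero_le_two, mul_comm]
      _ < c ^ 2 := by gcongr
  · have h_small : c ≤ √2 * l1 := not_lt.1 h_large
    have hl1_pos : 0 < l1 := pos_of_mul_pos_right (hc.trans_le h_small) (Real.sqrt_nonneg 2)
    have h_ratio : c ^ 2 / l1 ^ 2 ≤ 2 := by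
      rw [div_le_iff₀ (by positivity), ← Real.sq_sqrt zero_le_two, ← mul_pow]
      gcongr
    have h_ratio_nonneg : 0 ≤ c ^ 2 / l1 ^ 2 := by positivity
    have h_cos : 1 - c ^ 2 / l1 ^ 2 < Real.cos θ := by
      rw [← Real.cos_arccos (x := 1 - c ^ 2 / l1 ^ 2) (by linarith) (by linarith),
        ← Real.cos_abs θ]
      exact Real.cos_lt_cos_of_nonneg_of_le_pi (abs_nonneg θ) (Real.arccos_le_pi _) hθ
    exact (lt_div_iff₀' (by positivity)).1 (sub_lt_comm.1 h_cos)

theorem Bfun_nonneg (l1 l2 : ℝ) (φ : ℝ → ℝ) (u : ℝ) : 0 ≤ Bfun l1 l2 φ u := by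
  rw [Bfun]
  positivity

theorem Bfun_le_sq (hl : l2 ^ 2 ≤ l1 ^ 2) (φ : ℝ → ℝ) (u : ℝ) : Bfun l1 l2 φ u ≤ l1 ^ 2 :=
  calc Bfun l1 l2 φ u ≤ l1 ^ 2 * Real.cos (φ u) ^ 2 + l1 ^ 2 * Real.sin (φ u) ^ 2 := by
        rw [Bfun]; gcongr
    _ = l1 ^ 2 := by rw [← mul_add, Real.cos_sq_add_sin_sq, mul_one]

theorem phaseSpeedSq_cos_sin_div (hc : c ≠ 0) :
    phaseSpeedSq c (Real.cos θ) (Real.sin θ / c) B =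
      (c ^ 2 + (1 + Real.cos θ) * B) * (c ^ 2 - (1 - Real.cos θ) * B) / c ^ 2 := by
  rw [phaseSpeedSq, div_pow, Real.sin_sq]
  field_simp
  ring

theorem phaseSpeedSq_pos (hc : 0 < c) (hB : 0 ≤ B) (h_lt : (1 - Real.cos θ) * B < c ^ 2) :
    0 < phaseSpeedSq c (Real.cos θ) (Real.sin θ / c) B := by
  rw [phaseSpeedSq_cos_sin_div hc.ne']
  have h_one_add_cos : 0 ≤ 1 + Real.cos θ := by linarith [Real.neg_one_le_cos θ]
  exact div_pos (mul_pos (by positivity) (sub_pos.2 h_lt)) (by positivity)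

theorem phaseSpeedSq_Bfun_pos (hl2 : 0 ≤ l2) (hl : l2 ≤ l1) (hc : 0 < c)
    (hθ : |θ| < thetaPlus l1 c) (φ : ℝ → ℝ) (u : ℝ) :
    0 < phaseSpeedSq c (Real.cos θ) (Real.sin θ / c) (Bfun l1 l2 φ u) := by
  refine phaseSpeedSq_pos hc (Bfun_nonneg l1 l2 φ u) ?_
  calc (1 - Real.cos θ) * Bfun l1 l2 φ u ≤ (1 - Real.cos θ) * l1 ^ 2 :=
        mul_le_mul_of_nonneg_left (Bfun_le_sq (by gcongr) φ u) (sub_nonneg.2 (Real.cos_le_one θ))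
    _ = l1 ^ 2 * (1 - Real.cos θ) := mul_comm _ _
    _ < c ^ 2 := sq_mul_one_sub_cos_lt_sq (hl2.trans hl) hc hθ

end SpeedPositivity

theorem catGauss_harmonic_and_Hopf_general {l1 l2 c a D : ℝ} {f φ : ℝ → ℝ}
    (h_pos : ∀ u, 0 < phaseSpeedSq c a D (Bfun l1 l2 φ u))
    (hφ : ∀ u, HasDerivAt φ √(phaseSpeedSq c a D (Bfun l1 l2 φ u)) u)
    (hf : ∀ u, HasDerivAt f (D * Bfun l1 l2 φ u) u) (u v : ℝ) :
    (catGauss_zzbar c f φ u v *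
        ((l1 : ℂ) ^ 2 * (catGauss c f φ u v + (starRingEnd ℂ) (catGauss c f φ u v)) ^ 2 -
          (l2 : ℂ) ^ 2 * (catGauss c f φ u v - (starRingEnd ℂ) (catGauss c f φ u v)) ^ 2) =
      2 * ((l1 : ℂ) ^ 2 * (catGauss c f φ u v + (starRingEnd ℂ) (catGauss c f φ u v)) -
          (l2 : ℂ) ^ 2 * (catGauss c f φ u v - (starRingEnd ℂ) (catGauss c f φ u v))) *
        catGauss_z c f φ u v * catGauss_zbar c f φ u v) ∧
    catGauss_z c f φ u v * (starRingEnd ℂ) (catGauss_zbar c f φ u v) =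
      (1 / 8 : ℂ) * ((a : ℂ) - I * ((c * D : ℝ) : ℂ)) *
        ((l1 : ℂ) ^ 2 * (catGauss c f φ u v + (starRingEnd ℂ) (catGauss c f φ u v)) ^ 2 -
          (l2 : ℂ) ^ 2 * (catGauss c f φ u v - (starRingEnd ℂ) (catGauss c f φ u v)) ^ 2) := by
  have hω (t : ℝ) : HasDerivAt (catPhase f φ) (catPhaseDeriv l1 l2 c a D φ t) t :=
    hasDerivAt_catPhase (hf t) (hφ t)
  refine ⟨catGauss_harmonic_of_phase hω (hasDerivAt_catPhaseDeriv (h_pos u) (hφ u)) ?_ v,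
    catGauss_hopf_of_phase (hω u) (catPhaseDeriv_sub_mul_conj_sub (h_pos u).le) v⟩
  rw [catPhaseDeriv_sq_add_sq (h_pos u).le]
  linear_combination (-2 * Kfun l1 l2 φ u * Bfun l1 l2 φ u * D *
    √(phaseSpeedSq c a D (Bfun l1 l2 φ u)) : ℂ) * I_sq

theorem catGauss_harmonic_and_Hopf
    (l1 l2 c θ : ℝ) (hl : l1 ≥ l2) (hl2 : l2 > 0) (hc : c > 0)
    (hθ : |θ| < thetaPlus l1 c)
    (φ : ℝ → ℝ) (hφ : Differentiable ℝ φ) (hφ0 : φ 0 = 0)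
    (hφ' : ∀ u, deriv φ u =
      Real.sqrt (c ^ 2 + 2 * Real.cos θ * Bfun l1 l2 φ u -
        (Real.sin θ / c) ^ 2 * Bfun l1 l2 φ u ^ 2))
    (f : ℝ → ℝ) (hf : Differentiable ℝ f) (hf0 : f 0 = 0)
    (hf' : ∀ u, deriv f u = (Real.sin θ / c) * Bfun l1 l2 φ u) :
    ∀ u v : ℝ,
      (catGauss_zzbar c f φ u v *
          ((l1 : ℂ) ^ 2 * (catGauss c f φ u v + (starRingEnd ℂ) (catGauss c f φ u v)) ^ 2 -
            (l2 : ℂ) ^ 2 * (catGauss c f φ u v - (starRingEnd ℂ) (catGauss c f φ u v)) ^ 2) =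
        2 * ((l1 : ℂ) ^ 2 * (catGauss c f φ u v + (starRingEnd ℂ) (catGauss c f φ u v)) -
            (l2 : ℂ) ^ 2 * (catGauss c f φ u v - (starRingEnd ℂ) (catGauss c f φ u v))) *
          catGauss_z c f φ u v * catGauss_zbar c f φ u v) ∧
      catGauss_z c f φ u v * (starRingEnd ℂ) (catGauss_zbar c f φ u v) =
        (1 / 8 : ℂ) * ((Real.cos θ : ℂ) - Complex.I * (Real.sin θ : ℂ)) *
          ((l1 : ℂ) ^ 2 * (catGauss c f φ u v + (starRingEnd ℂ) (catGauss c f φ u v)) ^ 2 -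
            (l2 : ℂ) ^ 2 * (catGauss c f φ u v - (starRingEnd ℂ) (catGauss c f φ u v)) ^ 2) := by
  have h_main := catGauss_harmonic_and_Hopf_general (phaseSpeedSq_Bfun_pos hl2.le hl hc hθ φ)
    (fun u => (hφ u).hasDerivAt.congr_deriv (hφ' u))
    (fun u => (hf u).hasDerivAt.congr_deriv (hf' u))
  rwa [mul_div_cancel₀ (Real.sin θ) hc.ne'] at h_main
end
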